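/- Let M be a horizontally linked R-module of finite and positive G-dimension, and set n = rgr(M). Then Ass_R(Ext^n_R(M,R)) = { p ∈ Spec R : Gdim_{R_p}(M_p) ≠ 0, depth_{R_p}((λM)_p) = n = rgr_{R_p}(M_p) }. -/

import Mathlib

open CategoryTheory

noncomputable section

universe u

/-- The `i`-th Ext group `Ext^i_R(M,N)`, as a type (with its `R`-module structure). -/
abbrev extM (R : Type u) [CommRing R] (i : ℕ) (M N : Type u) [AddCommGroup M] [Module R M]
    [AddCommGroup N] [Module R N] : Type u :=
  ((Ext R (ModuleCat.{u} R) i).obj (Opposite.op (ModuleCat.of R M))).obj (ModuleCat.of R N)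

/-- The `i`-th Tor group `Tor^R_i(M,N)`, as a type. -/
abbrev torM (R : Type u) [CommRing R] (i : ℕ) (M N : Type u) [AddCommGroup M] [Module R M]
    [AddCommGroup N] [Module R N] : Type u :=
  ((Tor (ModuleCat.{u} R) i).obj (ModuleCat.of R M)).obj (ModuleCat.of R N)

/-- The `i`-th local cohomology `H^i_I(M)`, as a type. -/
abbrev locCoh (R : Type u) [CommRing R] (I : Ideal R) (i : ℕ) (M : Type u) [AddCommGroup M]
    [Module R M] : Type u :=
  (localCohomology I i).obj (ModuleCat.of R M)

/-- A submodule `N ≤ M` is superfluous if `K ⊔ N = ⊤` implies `K = ⊤`. -/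
def Submodule.IsSuperfluous {R M : Type u} [CommRing R] [AddCommGroup M] [Module R M]
    (N : Submodule R M) : Prop :=
  ∀ K : Submodule R M, K ⊔ N = ⊤ → K = ⊤

/-- A minimal projective resolution of `M` by finitely generated projective modules:
each `P i → Ω^i M` is a projective cover (i.e. has superfluous kernel). -/
structure MinRes (R : Type u) [CommRing R] (M : Type u) [AddCommGroup M] [Module R M] where
  P : ℕ → ModuleCat.{u} R
  projective : ∀ i, Module.Projective R (P i)
  finite : ∀ i, Module.Finite R (P i)
  d : (i : ℕ) → (↥(P (i + 1)) →ₗ[R] ↥(P i))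
  ε : ↥(P 0) →ₗ[R] M
  surj : Function.Surjective ε
  exact0 : LinearMap.range (d 0) = LinearMap.ker ε
  exact : ∀ i, LinearMap.range (d (i + 1)) = LinearMap.ker (d i)
  min_eps : (LinearMap.ker ε).IsSuperfluous
  min_d : ∀ i, (LinearMap.ker (d i)).IsSuperfluous

namespace MinRes

variable {R M : Type u} [CommRing R] [AddCommGroup M] [Module R M]

/-- `T k F` is the Auslander-Bridger transpose `𝒯_{k+1} M = Tr Ω^k M`, computed as the
cokernel of `P_k* → P_{k+1}*`. -/
def T (F : MinRes R M) (k : ℕ) : Type u :=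
  (Module.Dual R ↥(F.P (k + 1))) ⧸ LinearMap.range (F.d k).dualMap

instance (F : MinRes R M) (k : ℕ) : AddCommGroup (F.T k) :=
  inferInstanceAs (AddCommGroup ((Module.Dual R ↥(F.P (k + 1))) ⧸
    LinearMap.range (F.d k).dualMap))

instance (F : MinRes R M) (k : ℕ) : Module R (F.T k) :=
  inferInstanceAs (Module R ((Module.Dual R ↥(F.P (k + 1))) ⧸
    LinearMap.range (F.d k).dualMap))

/-- The transpose `Tr M = coker(P₀* → P₁*)` computed from a minimal projective presentation. -/
abbrev Tr (F : MinRes R M) : Type u := F.T 0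

/-- `λM = ΩTr M`, realized as the image of `P₀* → P₁*` for a minimal projective
presentation `P₁ → P₀ → M → 0`. -/
def lambdaMod (F : MinRes R M) : Type u :=
  ↥(LinearMap.range (F.d 0).dualMap)

instance (F : MinRes R M) : AddCommGroup F.lambdaMod :=
  inferInstanceAs (AddCommGroup ↥(LinearMap.range (F.d 0).dualMap))

instance (F : MinRes R M) : Module R F.lambdaMod :=
  inferInstanceAs (Module R ↥(LinearMap.range (F.d 0).dualMap))

end MinRes

/-- `M` is a horizontally linked `R`-module, i.e. `M ≅ λλM`. -/
def IsHorizontallyLinked (R : Type u) [CommRing R] (M : Type u) [AddCommGroup M]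
    [Module R M] : Prop :=
  ∃ (F : MinRes R M) (G : MinRes R F.lambdaMod), Nonempty (G.lambdaMod ≃ₗ[R] M)

/-- `M` and `N` are horizontally linked to each other: `M ≅ λN` and `N ≅ λM`. -/
def MutuallyLinked (A : Type u) [CommRing A] (M N : Type u) [AddCommGroup M] [Module A M]
    [AddCommGroup N] [Module A N] : Prop :=
  ∃ (F : MinRes A M) (G : MinRes A N),
    Nonempty (F.lambdaMod ≃ₗ[A] N) ∧ Nonempty (G.lambdaMod ≃ₗ[A] M)

/-- `M` is linked to `N` by the ideal `c`: `c` annihilates both modules and they are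
horizontally linked to each other as `R ⧸ c`-modules. -/
def LinkedBy (R : Type u) [CommRing R] (c : Ideal R) (M N : Type u) [AddCommGroup M]
    [Module R M] [AddCommGroup N] [Module R N] : Prop :=
  ∃ (hM : Module.IsTorsionBySet R M c) (hN : Module.IsTorsionBySet R N c),
    letI := hM.module
    letI := hN.module
    MutuallyLinked (R ⧸ c) M N

/-- A stable module: no nonzero projective direct summand. -/
def IsStableModule (R : Type u) [CommRing R] (M : Type u) [AddCommGroup M] [Module R M] : Prop :=
  ∀ N : Submodule R M, Module.Projective R ↥N → (∃ N' : Submodule R M, IsCompl N N') → N = ⊥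

/-- `M` has G-dimension zero: `M` is finitely generated and reflexive,
and `Ext^i(M,R) = 0 = Ext^i(M*,R)` for all `i > 0`. -/
def IsGDimZero (R : Type u) [CommRing R] (M : Type u) [AddCommGroup M] [Module R M] : Prop :=
  Module.Finite R M ∧ Function.Bijective (Module.Dual.eval R M) ∧
    (∀ i : ℕ, 0 < i → Subsingleton (extM R i M R)) ∧
    (∀ i : ℕ, 0 < i → Subsingleton (extM R i (Module.Dual R M) R))

/-- `M` admits a resolution of length `≤ n` by modules of G-dimension zero. -/
def GDimLE (R : Type u) [CommRing R] : ℕ → ModuleCat.{u} R → Prop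
  | 0, M => IsGDimZero R ↥M
  | n + 1, M =>
    ∃ (G : ModuleCat.{u} R) (f : ↥G →ₗ[R] ↥M), IsGDimZero R ↥G ∧ Function.Surjective f ∧
      GDimLE R n (ModuleCat.of R ↥(LinearMap.ker f))

/-- The G-dimension of `M`: the minimal length of a resolution of `M` by modules of
G-dimension zero (`∞` if there is none). -/
def GDim (R : Type u) [CommRing R] (M : Type u) [AddCommGroup M] [Module R M] : ℕ∞ :=
  sInf {n : ℕ∞ | ∃ k : ℕ, n = k ∧ GDimLE R k (ModuleCat.of R M)}

/-- The reduced grade of `M`: `rgr M = inf{ i > 0 | Ext^i(M,R) ≠ 0 }`. -/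
def rgr (R : Type u) [CommRing R] (M : Type u) [AddCommGroup M] [Module R M] : ℕ∞ :=
  sInf {n : ℕ∞ | ∃ k : ℕ, n = k ∧ 0 < k ∧ ¬ Subsingleton (extM R k M R)}

/-- The grade of `M`: `gr M = inf{ i ≥ 0 | Ext^i(M,R) ≠ 0 }`. -/
def egrade (R : Type u) [CommRing R] (M : Type u) [AddCommGroup M] [Module R M] : ℕ∞ :=
  sInf {n : ℕ∞ | ∃ k : ℕ, n = k ∧ ¬ Subsingleton (extM R k M R)}

/-- `depth_I(M) = inf{ i | Ext^i(R/I, M) ≠ 0 }`; for `I` the maximal ideal of a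
local ring this is the depth of `M`. -/
def edepth (R : Type u) [CommRing R] (I : Ideal R) (M : Type u) [AddCommGroup M]
    [Module R M] : ℕ∞ :=
  sInf {n : ℕ∞ | ∃ k : ℕ, n = k ∧ ¬ Subsingleton (extM R k (R ⧸ I) M)}

/-- The depth of the local ring `R`. -/
def rdepth (R : Type u) [CommRing R] [IsLocalRing R] : ℕ∞ :=
  edepth R (IsLocalRing.maximalIdeal R) R

/-- `depth_{R_p}(M_p)`. -/
def locDepth (R : Type u) [CommRing R] (p : Ideal R) [p.IsPrime] (M : Type u) [AddCommGroup M]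
    [Module R M] : ℕ∞ :=
  edepth (Localization.AtPrime p) (IsLocalRing.maximalIdeal (Localization.AtPrime p))
    (LocalizedModule p.primeCompl M)

/-- `depth R_p`. -/
def locRingDepth (R : Type u) [CommRing R] (p : Ideal R) [p.IsPrime] : ℕ∞ :=
  rdepth (Localization.AtPrime p)

/-- `Gdim_{R_p}(M_p)`. -/
def locGDim (R : Type u) [CommRing R] (p : Ideal R) [p.IsPrime] (M : Type u) [AddCommGroup M]
    [Module R M] : ℕ∞ :=
  GDim (Localization.AtPrime p) (LocalizedModule p.primeCompl M)

/-- `rgr_{R_p}(M_p)`. -/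
def locRgr (R : Type u) [CommRing R] (p : Ideal R) [p.IsPrime] (M : Type u) [AddCommGroup M]
    [Module R M] : ℕ∞ :=
  rgr (Localization.AtPrime p) (LocalizedModule p.primeCompl M)

/-- `dim_{R_p}(M_p)`, the Krull dimension of the support of `M_p` over `R_p`. -/
def locDim (R : Type u) [CommRing R] (p : Ideal R) [p.IsPrime] (M : Type u) [AddCommGroup M]
    [Module R M] : WithBot ℕ∞ :=
  ringKrullDim ((Localization.AtPrime p) ⧸
    Module.annihilator (Localization.AtPrime p) (LocalizedModule p.primeCompl M))

/-- `M` satisfies the condition `S̃_k`: `depth_{R_p}(M_p) ≥ min{k, depth R_p}` for all primes. -/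
def Stilde (R : Type u) [CommRing R] (k : ℕ) (M : Type u) [AddCommGroup M] [Module R M] : Prop :=
  ∀ (p : Ideal R) (_ : p.IsPrime), min (k : ℕ∞) (locRingDepth R p) ≤ locDepth R p M

/-- `M` satisfies Serre's condition `(S_k)`:
`depth_{R_p}(M_p) ≥ min{k, dim_{R_p}(M_p)}` for all primes. -/
def SerreS (R : Type u) [CommRing R] (k : ℕ) (M : Type u) [AddCommGroup M] [Module R M] : Prop :=
  ∀ (p : Ideal R) (_ : p.IsPrime),
    min (k : WithBot ℕ∞) (locDim R p M) ≤ (locDepth R p M : WithBot ℕ∞)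

/-- `M` is a `k`-th syzygy module. -/
def IsKthSyzygy (R : Type u) [CommRing R] : ℕ → ModuleCat.{u} R → Prop
  | 0, _ => True
  | k + 1, M =>
    ∃ (P : ModuleCat.{u} R) (f : ↥M →ₗ[R] ↥P), Module.Projective R ↥P ∧ Module.Finite R ↥P ∧
      Function.Injective f ∧ IsKthSyzygy R k (ModuleCat.of R (↥P ⧸ LinearMap.range f))

/-- The `I`-torsion submodule `Γ_I(M) = { x | I^n x = 0 for some n }`. -/
def gammaTorsion (R : Type u) [CommRing R] (I : Ideal R) (M : Type u) [AddCommGroup M]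
    [Module R M] : Submodule R M where
  carrier := {x | ∃ n : ℕ, ∀ a ∈ I ^ n, a • x = 0}
  zero_mem' := ⟨0, fun a _ => smul_zero a⟩
  add_mem' := by
    rintro x y ⟨n, hn⟩ ⟨m, hm⟩
    exact ⟨n + m, fun a ha => by
      rw [smul_add, hn a (Ideal.pow_le_pow_right (Nat.le_add_right n m) ha),
        hm a (Ideal.pow_le_pow_right (Nat.le_add_left m n) ha), add_zero]⟩
  smul_mem' := by
    rintro c x ⟨n, hn⟩
    exact ⟨n, fun a ha => by rw [smul_comm, hn a ha, smul_zero]⟩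

/-- `N` has finite flat dimension (characterized by uniform vanishing of `Tor`). -/
def HasFiniteFlatDim (R : Type u) [CommRing R] (N : Type u) [AddCommGroup N] [Module R N] : Prop :=
  ∃ n : ℕ, ∀ i : ℕ, n < i → ∀ (M : ModuleCat.{u} R), Subsingleton (torM R i ↥M N)

/-- `N` has finite injective dimension (characterized by uniform vanishing of `Ext`). -/
def HasFiniteInjDim (R : Type u) [CommRing R] (N : Type u) [AddCommGroup N] [Module R N] : Prop :=
  ∃ n : ℕ, ∀ i : ℕ, n < i → ∀ (M : ModuleCat.{u} R), Subsingleton (extM R i ↥M N)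

/-- `K` is a semidualizing `R`-module. -/
def IsSemidualizing (R : Type u) [CommRing R] (K : Type u) [AddCommGroup K] [Module R K] : Prop :=
  Module.Finite R K ∧ Function.Bijective (LinearMap.lsmul R K) ∧
    ∀ i : ℕ, 0 < i → Subsingleton (extM R i K K)

/-- The biduality map `M → Hom(Hom(M,K),K)`. -/
def evalK (R : Type u) [CommRing R] (K M : Type u) [AddCommGroup K] [Module R K]
    [AddCommGroup M] [Module R M] : M →ₗ[R] ((M →ₗ[R] K) →ₗ[R] K) :=
  LinearMap.applyₗ

/-- `M` has `G_K`-dimension zero. -/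
def IsGKDimZero (R : Type u) [CommRing R] (K M : Type u) [AddCommGroup K] [Module R K]
    [AddCommGroup M] [Module R M] : Prop :=
  Module.Finite R M ∧ Function.Bijective (evalK R K M) ∧
    (∀ i : ℕ, 0 < i → Subsingleton (extM R i M K)) ∧
    (∀ i : ℕ, 0 < i → Subsingleton (extM R i (M →ₗ[R] K) K))

/-- `M` admits a resolution of length `≤ n` by modules of `G_K`-dimension zero. -/
def GKDimLE (R : Type u) [CommRing R] (K : Type u) [AddCommGroup K] [Module R K] :
    ℕ → ModuleCat.{u} R → Prop
  | 0, M => IsGKDimZero R K ↥M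
  | n + 1, M =>
    ∃ (G : ModuleCat.{u} R) (f : ↥G →ₗ[R] ↥M), IsGKDimZero R K ↥G ∧ Function.Surjective f ∧
      GKDimLE R K n (ModuleCat.of R ↥(LinearMap.ker f))

/-- The `G_K`-dimension of `M`. -/
def GKDim (R : Type u) [CommRing R] (K M : Type u) [AddCommGroup K] [Module R K]
    [AddCommGroup M] [Module R M] : ℕ∞ :=
  sInf {n : ℕ∞ | ∃ k : ℕ, n = k ∧ GKDimLE R K k (ModuleCat.of R M)}

/-- The grade of a module, `gr_R(M) = grade(Ann_R(M), R) = inf{i | Ext^i(R/Ann M, R) ≠ 0}`. -/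
def grAnn (R : Type u) [CommRing R] (M : Type u) [AddCommGroup M] [Module R M] : ℕ∞ :=
  egrade R (R ⧸ Module.annihilator R M)

/-- The grade of an ideal, `grade(I) = inf{i | Ext^i(R/I, R) ≠ 0}`. -/
def gradeI (R : Type u) [CommRing R] (I : Ideal R) : ℕ∞ :=
  egrade R (R ⧸ I)

/-- The ideal `I` is `G_K`-Gorenstein: `R/I` is `G_K`-perfect and `Ext^{gr I}(R/I, K)` is
cyclic. -/
def IsGKGorensteinIdeal (R : Type u) [CommRing R] (K : Type u) [AddCommGroup K] [Module R K]
    (I : Ideal R) : Prop :=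
  ∃ n : ℕ, grAnn R (R ⧸ I) = (n : ℕ∞) ∧ GKDim R K (R ⧸ I) = (n : ℕ∞) ∧
    ∃ x : extM R n (R ⧸ I) K, Submodule.span R {x} = ⊤

end

section Aux
universe u

section bridge
variable {R : Type u} [CommRing R]

/-- Abelian Ext -/
abbrev aExt (R : Type u) [CommRing R] (M N : Type u) [AddCommGroup M] [Module R M]
    [AddCommGroup N] [Module R N] (i : ℕ) : Type u :=
  Abelian.Ext.{u} (ModuleCat.of R M) (ModuleCat.of R N) i

noncomputable def extMIso {M : Type u} [AddCommGroup M] [Module R M]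
    (P : ProjectiveResolution (ModuleCat.of R M)) (N : Type u) [AddCommGroup N] [Module R N]
    (i : ℕ) : extM R (i+1) M N ≃ₗ[R]
      ((((P.complex.linearYonedaObj R (ModuleCat.of R N)).sc' i (i+1) (i+2))).moduleCatLeftHomologyData.H) :=
  (P.isoExt (R := R) (i+1) (ModuleCat.of R N) ≪≫
    ShortComplex.homologyMapIso ((P.complex.linearYonedaObj R (ModuleCat.of R N)).isoSc' i (i+1) (i+2)
      (by simp) (by simp)) ≪≫
    ((P.complex.linearYonedaObj R (ModuleCat.of R N)).sc' i (i+1) (i+2)).moduleCatHomologyIso).toLinearEquiv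

lemma extM_succ_iff {M : Type u} [AddCommGroup M] [Module R M]
    (P : ProjectiveResolution (ModuleCat.of R M)) (N : Type u) [AddCommGroup N] [Module R N]
    (i : ℕ) : Subsingleton (extM R (i+1) M N) ↔
      ∀ f : P.complex.X (i+1) ⟶ ModuleCat.of R N, P.complex.d (i+2) (i+1) ≫ f = 0 →
        ∃ g : P.complex.X i ⟶ ModuleCat.of R N, P.complex.d (i+1) i ≫ g = f := by
  have h1 : Subsingleton (extM R (i+1) M N) ↔
      (P.complex.linearYonedaObj R (ModuleCat.of R N)).ExactAt (i+1) := by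
    rw [HomologicalComplex.exactAt_iff_isZero_homology,
      ← (P.isoExt (R := R) (i+1) (ModuleCat.of R N)).isZero_iff, ModuleCat.isZero_iff_subsingleton]
  rw [h1, HomologicalComplex.exactAt_iff' _ i (i+1) (i+2) (by simp) (by simp),
    ShortComplex.moduleCat_exact_iff]
  rfl

lemma extM_zero_iff {M : Type u} [AddCommGroup M] [Module R M]
    (P : ProjectiveResolution (ModuleCat.of R M)) (N : Type u) [AddCommGroup N] [Module R N] :
     Subsingleton (extM R 0 M N) ↔
      ∀ f : P.complex.X 0 ⟶ ModuleCat.of R N, P.complex.d 1 0 ≫ f = 0 → f = 0 := by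
  have h1 : Subsingleton (extM R 0 M N) ↔
      (P.complex.linearYonedaObj R (ModuleCat.of R N)).ExactAt 0 := by
    rw [HomologicalComplex.exactAt_iff_isZero_homology,
      ← (P.isoExt (R := R) 0 (ModuleCat.of R N)).isZero_iff, ModuleCat.isZero_iff_subsingleton]
  rw [h1, HomologicalComplex.exactAt_iff' _ 0 0 1 (by simp) (by simp),
    ShortComplex.moduleCat_exact_iff]
  constructor
  · intro h f hf
    obtain ⟨g, hg⟩ := h f hf
    rw [← hg]
    have : (P.complex.d 0 0) = 0 := P.complex.shape _ _ (by simp)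
    exact (congrArg (fun t => t ≫ (show P.complex.X 0 ⟶ ModuleCat.of R N from g)) this).trans
      Limits.zero_comp
  · intro h f hf
    exact ⟨0, by rw [map_zero]; exact (h f hf).symm⟩

lemma aExt_succ_iff {M : Type u} [AddCommGroup M] [Module R M]
    (P : ProjectiveResolution (ModuleCat.of R M)) (N : Type u) [AddCommGroup N] [Module R N]
    (i : ℕ) : Subsingleton (aExt R M N (i+1)) ↔
      ∀ f : P.complex.X (i+1) ⟶ ModuleCat.of R N, P.complex.d (i+2) (i+1) ≫ f = 0 →
        ∃ g : P.complex.X i ⟶ ModuleCat.of R N, P.complex.d (i+1) i ≫ g = f := by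
  constructor
  · intro h f hf
    exact (P.extMk_eq_zero_iff f (i+2) rfl hf i rfl).1 (Subsingleton.elim _ _)
  · intro h
    refine subsingleton_of_forall_eq 0 fun y => ?_
    obtain ⟨f, hf, rfl⟩ := P.extMk_surjective y (i+2) rfl
    exact (P.extMk_eq_zero_iff f (i+2) rfl hf i rfl).2 (h f hf)

lemma aExt_zero_iff' {M : Type u} [AddCommGroup M] [Module R M]
    (N : Type u) [AddCommGroup N] [Module R N] :
    Subsingleton (aExt R M N 0) ↔ ∀ f : M →ₗ[R] N, f = 0 := by
  rw [(Abelian.Ext.addEquiv₀).toEquiv.subsingleton_congr, ModuleCat.homEquiv.subsingleton_congr]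
  exact ⟨fun h f => Subsingleton.elim _ _, fun h => subsingleton_of_forall_eq 0 h⟩

lemma extM_iff {M : Type u} [AddCommGroup M] [Module R M]
    (N : Type u) [AddCommGroup N] [Module R N] (i : ℕ) :
    Subsingleton (extM R i M N) ↔ Subsingleton (aExt R M N i) := by
  let P := ProjectiveResolution.of (ModuleCat.of R M)
  cases i with
  | succ i => rw [extM_succ_iff P, aExt_succ_iff P]
  | zero =>
    rw [extM_zero_iff P, (Abelian.Ext.addEquiv₀).toEquiv.subsingleton_congr]
    let e : P.complex.X 0 ⟶ ModuleCat.of R M := P.π.f 0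
    have hepi : Epi e := inferInstanceAs (Epi (P.π.f 0))
    have he : P.complex.d 1 0 ≫ e = 0 := P.complex_d_comp_π_f_zero
    have hS : (ShortComplex.mk _ _ he).Exact := P.exact₀
    constructor
    · intro h
      refine subsingleton_of_forall_eq 0 fun y => ?_
      have := h (e ≫ y) (by rw [← Category.assoc, he, Limits.zero_comp])
      rw [← Limits.comp_zero (f := e)] at this
      exact (cancel_epi e).1 this
    · intro h f hf
      have : hS.desc f hf = 0 := Subsingleton.elim (α := (ModuleCat.of R M ⟶ ModuleCat.of R N)) _ _
      rw [← hS.g_desc f hf, this, Limits.comp_zero]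

end bridge

/-- A resolution by finitely generated projectives. -/
structure PRes (R : Type u) [CommRing R] (M : Type u) [AddCommGroup M] [Module R M] where
  P : ℕ → ModuleCat.{u} R
  projective : ∀ i, Module.Projective R (P i)
  finite : ∀ i, Module.Finite R (P i)
  d : (i : ℕ) → (↥(P (i + 1)) →ₗ[R] ↥(P i))
  ε : ↥(P 0) →ₗ[R] M
  surj : Function.Surjective ε
  exact0 : LinearMap.range (d 0) = LinearMap.ker ε
  exact : ∀ i, LinearMap.range (d (i + 1)) = LinearMap.ker (d i)

def MinRes.toPRes {R : Type u} [CommRing R] {M : Type u} [AddCommGroup M] [Module R M]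
    (F : MinRes R M) : PRes R M :=
  ⟨F.P, F.projective, F.finite, F.d, F.ε, F.surj, F.exact0, F.exact⟩

/-- subquotient -/
abbrev subQ {R : Type u} [CommRing R] {V : Type u} [AddCommGroup V] [Module R V]
    (K Z : Submodule R V) : Type u := K ⧸ Z.comap K.subtype

namespace PRes
variable {R : Type u} [CommRing R] {M : Type u} [AddCommGroup M] [Module R M]

noncomputable section

lemma dd (Q : PRes R M) (i : ℕ) : Q.d i ∘ₗ Q.d (i+1) = 0 := by
  ext x
  have : Q.d (i+1) x ∈ LinearMap.ker (Q.d i) := by rw [← Q.exact]; exact ⟨x, rfl⟩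
  exact this

lemma εd (Q : PRes R M) : Q.ε ∘ₗ Q.d 0 = 0 := by
  ext x
  have : Q.d 0 x ∈ LinearMap.ker (Q.ε) := by rw [← Q.exact0]; exact ⟨x, rfl⟩
  exact this

def cx (Q : PRes R M) : ChainComplex (ModuleCat.{u} R) ℕ :=
  ChainComplex.of Q.P (fun i => ModuleCat.ofHom (Q.d i)) (fun i => by
    rw [← ModuleCat.ofHom_comp, Q.dd]; rfl)

lemma cx_d (Q : PRes R M) (i : ℕ) : Q.cx.d (i+1) i = ModuleCat.ofHom (Q.d i) :=
  (ChainComplex.of_d Q.P (fun i => ModuleCat.ofHom (Q.d i)) i)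

def toPR (Q : PRes R M) : ProjectiveResolution (ModuleCat.of R M) where
  complex := Q.cx
  projective := fun n => by
    have := Q.projective n
    exact (IsProjective.iff_projective (R := R) (Q.P n)).1 this
  π := (ChainComplex.toSingle₀Equiv _ _).symm ⟨(ModuleCat.ofHom Q.ε : Q.P 0 ⟶ _), by
    rw [Q.cx_d]
    exact congrArg ModuleCat.ofHom Q.εd⟩
  quasiIso := ⟨fun n => by
    cases n
    · rw [ChainComplex.quasiIsoAt₀_iff, ShortComplex.quasiIso_iff_of_zeros']
      · have hz : ModuleCat.ofHom (Q.d 0) ≫ ModuleCat.ofHom Q.ε = 0 :=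
          congrArg ModuleCat.ofHom Q.εd
        refine (ShortComplex.exact_and_epi_g_iff_of_iso (S₂ := ShortComplex.mk _ _ hz) ?_).2
          ⟨?_, ?_⟩
        · exact ShortComplex.isoMk (Iso.refl _) (Iso.refl _) (Iso.refl _)
            ((Category.id_comp _).trans ((Q.cx_d 0).symm.trans (Category.comp_id _).symm))
            ((Category.id_comp _).trans (Eq.trans (by simp; rfl) (Category.comp_id _).symm))
        · rw [ShortComplex.moduleCat_exact_iff]
          intro x hx
          have : x ∈ LinearMap.ker Q.ε := hx
          rw [← Q.exact0] at this
          exact this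
        · exact (ModuleCat.epi_iff_surjective _).2 Q.surj
      all_goals rfl
    · rename_i n
      rw [quasiIsoAt_iff_exactAt']
      · rw [HomologicalComplex.exactAt_iff' _ (n+2) (n+1) n (by simp) (by simp),
          ShortComplex.moduleCat_exact_iff]
        intro x hx
        change (Q.cx.d (n+1) n) x = 0 at hx
        change ∃ y, (Q.cx.d (n+1+1) (n+1)) y = x
        rw [cx_d] at hx ⊢
        have : x ∈ LinearMap.ker (Q.d n) := hx
        rw [← Q.exact] at this
        exact this
      · apply ChainComplex.exactAt_succ_single_obj⟩

lemma extM_iff' (Q : PRes R M) (N : Type u) [AddCommGroup N] [Module R N] (i : ℕ) :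
    Subsingleton (extM R (i+1) M N) ↔ ∀ f : Q.P (i+1) →ₗ[R] N, f ∘ₗ Q.d (i+1) = 0 →
      ∃ g : Q.P i →ₗ[R] N, g ∘ₗ Q.d i = f := by
  rw [extM_succ_iff Q.toPR]
  change (∀ f : Q.P (i+1) ⟶ ModuleCat.of R N, Q.cx.d (i+2) (i+1) ≫ f = 0 →
        ∃ g : Q.P i ⟶ ModuleCat.of R N, Q.cx.d (i+1) i ≫ g = f) ↔ _
  rw [cx_d, cx_d]
  constructor
  · intro h f hf
    obtain ⟨g, hg⟩ := h (ModuleCat.ofHom f) (congrArg ModuleCat.ofHom hf)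
    exact ⟨g.hom, congrArg ModuleCat.Hom.hom hg⟩
  · intro h f hf
    obtain ⟨g, hg⟩ := h f.hom (congrArg ModuleCat.Hom.hom hf)
    exact ⟨ModuleCat.ofHom g, ModuleCat.hom_ext hg⟩

/-- cocycles -/
def K (Q : PRes R M) (i : ℕ) : Submodule R (Q.P i →ₗ[R] R) :=
  LinearMap.ker (Q.d i).dualMap

/-- coboundaries -/
def Z (Q : PRes R M) (i : ℕ) : Submodule R (Q.P (i+1) →ₗ[R] R) :=
  LinearMap.range (Q.d i).dualMap

/-- concrete cohomology of the dual -/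
abbrev Hc (Q : PRes R M) (i : ℕ) : Type u :=
  subQ (V := Q.P (i+1) →ₗ[R] R) (Q.K (i+1)) (Q.Z i)

lemma extMEquivHc (Q : PRes R M) (i : ℕ) : Nonempty (extM R (i+1) M R ≃ₗ[R] Q.Hc i) := by
  suffices h : Nonempty (((((Q.toPR.complex.linearYonedaObj R (ModuleCat.of R R)).sc' i (i+1)
      (i+2))).moduleCatLeftHomologyData.H) ≃ₗ[R] Q.Hc i) from
    h.map fun e => (extMIso Q.toPR R i).trans e
  let S := ((Q.toPR.complex.linearYonedaObj R (ModuleCat.of R R)).sc' i (i+1) (i+2))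
  let e : S.X₂ ≃ₗ[R] (Q.P (i+1) →ₗ[R] R) :=
      (ModuleCat.homLinearEquiv (S := R) (M := Q.P (i+1)) (N := ModuleCat.of R R))
  have hg : ∀ x : S.X₂, S.g.hom x = 0 ↔ e x ∈ Q.K (i+1) := by
    intro x
    have h : (Q.cx.d (i+2) (i+1) ≫ (show Q.P (i+1) ⟶ ModuleCat.of R R from x) = 0) ↔
      e x ∈ Q.K (i+1) := by
      rw [cx_d]
      exact ⟨fun h => congrArg ModuleCat.Hom.hom h, fun h => ModuleCat.hom_ext h⟩
    exact h
  have hf : ∀ x : S.X₂, (∃ y, S.f.hom y = x) ↔ e x ∈ Q.Z i := by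
    intro x
    have h : (∃ y : Q.P i ⟶ ModuleCat.of R R, Q.cx.d (i+1) i ≫ y =
      (show Q.P (i+1) ⟶ ModuleCat.of R R from x)) ↔ e x ∈ Q.Z i := by
      rw [cx_d]
      constructor
      · rintro ⟨y, hy⟩
        exact ⟨y.hom, congrArg ModuleCat.Hom.hom hy⟩
      · rintro ⟨y, hy⟩
        exact ⟨ModuleCat.ofHom y, ModuleCat.hom_ext hy⟩
    exact h
  have he : (LinearMap.ker S.g.hom).map (e : S.X₂ →ₗ[R] _) = Q.K (i+1) := by
    ext y
    constructor
    · rintro ⟨x, hx, rfl⟩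
      exact (hg x).1 hx
    · intro hy
      refine ⟨e.symm y, ?_, e.apply_symm_apply y⟩
      refine (hg _).2 ?_
      rw [e.apply_symm_apply]; exact hy
  let e' : LinearMap.ker S.g.hom ≃ₗ[R] Q.K (i+1) := e.ofSubmodules _ _ he
  have hr : ∀ x, x ∈ LinearMap.range S.moduleCatToCycles ↔ (e' x : (Q.P (i+1) →ₗ[R] R)) ∈ Q.Z i := by
    intro x
    refine Iff.trans ?_ (hf x.1)
    constructor
    · rintro ⟨y, hy⟩
      exact ⟨y, congrArg Subtype.val hy⟩
    · rintro ⟨y, hy⟩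
      exact ⟨y, Subtype.ext hy⟩
  refine ⟨?_⟩
  exact Submodule.Quotient.equiv (LinearMap.range S.moduleCatToCycles) _ e' (by
    ext y
    constructor
    · rintro ⟨x, hx, rfl⟩
      exact (hr x).1 hx
    · intro hy
      refine ⟨e'.symm y, (hr _).2 ?_, e'.apply_symm_apply y⟩
      rw [e'.apply_symm_apply]; exact hy)
end
end PRes

section tool
variable {R : Type u} [CommRing R]
variable {X A B C D Y : Type u} [AddCommGroup X] [Module R X] [AddCommGroup A] [Module R A]
  [AddCommGroup B] [Module R B] [AddCommGroup C] [Module R C] [AddCommGroup D] [Module R D]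
  [AddCommGroup Y] [Module R Y]

open Abelian

/-- functoriality of Ext in the second variable -/
noncomputable def post (X : Type u) [AddCommGroup X] [Module R X] (g : A →ₗ[R] B) (i : ℕ)
    (x : aExt R X A i) : aExt R X B i :=
  x.comp (Ext.mk₀ (ModuleCat.ofHom g)) (add_zero i)

lemma post_comp (g : A →ₗ[R] B) (h : B →ₗ[R] C) (i : ℕ) (x : aExt R X A i) :
    post X h i (post X g i x) = post X (h ∘ₗ g) i x := by
  unfold post
  rw [Ext.comp_assoc_of_third_deg_zero, Ext.mk₀_comp_mk₀, ModuleCat.ofHom_comp]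

lemma post_id (i : ℕ) (x : aExt R X A i) : post X LinearMap.id i x = x :=
  Ext.comp_mk₀_id x

lemma post_zero (g : A →ₗ[R] B) (i : ℕ) : post X g i 0 = 0 := Ext.zero_comp _ _ _ _ _

lemma post_zero' (i : ℕ) (x : aExt R X A i) : post X (0 : A →ₗ[R] B) i x = 0 := by
  unfold post
  have : ModuleCat.ofHom (0 : A →ₗ[R] B) = 0 := rfl
  rw [this, Ext.mk₀_zero, Ext.comp_zero]

lemma post_sub (g : A →ₗ[R] B) (i : ℕ) (x y : aExt R X A i) :
    post X g i (x - y) = post X g i x - post X g i y := by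
  unfold post
  rw [sub_eq_add_neg, Ext.add_comp, Ext.neg_comp, ← sub_eq_add_neg]

lemma post_add' (g h : A →ₗ[R] B) (i : ℕ) (x : aExt R X A i) :
    post X (g + h) i x = post X g i x + post X h i x := by
  unfold post
  rw [← Ext.comp_add, ← Ext.mk₀_add]; rfl

lemma post_sum' {ι : Type} (s : Finset ι) (g : ι → (A →ₗ[R] B)) (i : ℕ) (x : aExt R X A i) :
    post X (∑ j ∈ s, g j) i x = ∑ j ∈ s, post X (g j) i x := by
  classical
  induction s using Finset.induction_on with
  | empty => simp [post_zero']
  | insert a s ha ih => rw [Finset.sum_insert ha, Finset.sum_insert ha, post_add', ih]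

lemma post_smul_zero (r : R) (hr : ∀ x : X, r • x = 0) (g : A →ₗ[R] B) (i : ℕ)
    (x : aExt R X A i) : post X (r • g) i x = 0 := by
  unfold post
  have h1 : ModuleCat.ofHom (r • g) = r • ModuleCat.ofHom g := rfl
  rw [h1, Ext.mk₀_smul, Ext.comp_smul]
  set y : aExt R X B i := x.comp (Ext.mk₀ (ModuleCat.ofHom g)) (add_zero i)
  rw [← Ext.mk₀_id_comp (r • y), Ext.comp_smul, ← Ext.smul_comp, ← Ext.mk₀_smul]
  have h2 : r • 𝟙 (ModuleCat.of R X) = 0 := by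
    ext x; exact hr x
  rw [h2, Ext.mk₀_zero, Ext.zero_comp]

/-- short exact sequences -/
structure SES (f : A →ₗ[R] B) (g : B →ₗ[R] C) : Prop where
  inj : Function.Injective f
  ex : Function.Exact f g
  surj : Function.Surjective g

variable {f : A →ₗ[R] B} {g : B →ₗ[R] C}

lemma SES.zero (h : SES f g) : ModuleCat.ofHom f ≫ ModuleCat.ofHom g = 0 := by
  ext x; exact h.ex.apply_apply_eq_zero x

lemma SES.short (h : SES f g) :
    (ShortComplex.mk (ModuleCat.ofHom f) (ModuleCat.ofHom g) h.zero).ShortExact :=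
  ModuleCat.shortComplex_shortExact _ h.ex h.inj h.surj

/-- connecting map -/
noncomputable def SES.δ (h : SES f g) (X : Type u) [AddCommGroup X] [Module R X] (i : ℕ)
    (x : aExt R X C i) : aExt R X A (i+1) :=
  Ext.comp x h.short.extClass rfl

lemma SES.δ_zero (h : SES f g) (i : ℕ) : h.δ X i 0 = 0 := Ext.zero_comp _ _ _ _ _

lemma SES.ex1 (h : SES f g) (i : ℕ) (x : aExt R X A (i+1)) (hx : post X f (i+1) x = 0) :
    ∃ y, h.δ X i y = x := Ext.covariant_sequence_exact₁ _ h.short x hx rfl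

lemma SES.ex2 (h : SES f g) (i : ℕ) (x : aExt R X B i) (hx : post X g i x = 0) :
    ∃ y, post X f i y = x := Ext.covariant_sequence_exact₂ _ h.short x hx

lemma SES.ex3 (h : SES f g) (i : ℕ) (x : aExt R X C i) (hx : h.δ X i x = 0) :
    ∃ y, post X g i y = x := Ext.covariant_sequence_exact₃ _ h.short x rfl hx

lemma post_inj0 (hf : Function.Injective f) (x : aExt R X A 0) (hx : post X f 0 x = 0) : x = 0 := by
  have : Mono (ModuleCat.ofHom f) := (ModuleCat.mono_iff_injective _).2 hf
  exact Ext.postcomp_mk₀_injective_of_mono (ModuleCat.of R X) (ModuleCat.ofHom f)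
    (hx.trans (post_zero f 0).symm)

lemma SES.inj_of (h : SES f g) (i : ℕ) (hC : Subsingleton (aExt R X C i)) (x : aExt R X A (i+1))
    (hx : post X f (i+1) x = 0) : x = 0 := by
  obtain ⟨y, rfl⟩ := h.ex1 i x hx
  rw [Subsingleton.elim y 0, h.δ_zero]

lemma SES.inj_of' (h : SES f g) (i : ℕ) (hC : ∀ j < i, Subsingleton (aExt R X C j))
    (x : aExt R X A i) (hx : post X f i x = 0) : x = 0 := by
  cases i with
  | zero => exact post_inj0 h.inj x hx
  | succ i => exact h.inj_of i (hC i (by omega)) x hx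

lemma sub_of {V : Type u} [AddCommGroup V] (h : ∀ x : V, x = 0) : Subsingleton V :=
  subsingleton_of_forall_eq 0 h

lemma SES.covA (h : SES f g) (i : ℕ) (hC : Subsingleton (aExt R X C i))
    (hB : Subsingleton (aExt R X B (i+1))) : Subsingleton (aExt R X A (i+1)) :=
  sub_of fun x => h.inj_of i hC x (Subsingleton.elim _ _)

lemma covA0 (hf : Function.Injective f) (hB : Subsingleton (aExt R X B 0)) :
    Subsingleton (aExt R X A 0) :=
  sub_of fun x => post_inj0 hf x (Subsingleton.elim _ _)

lemma SES.covA' (h : SES f g) (i : ℕ) (hC : ∀ j < i, Subsingleton (aExt R X C j))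
    (hB : Subsingleton (aExt R X B i)) : Subsingleton (aExt R X A i) :=
  sub_of fun x => h.inj_of' i hC x (Subsingleton.elim _ _)

lemma SES.covB (h : SES f g) (i : ℕ) (hA : Subsingleton (aExt R X A i))
    (hC : Subsingleton (aExt R X C i)) : Subsingleton (aExt R X B i) :=
  sub_of fun x => by
    obtain ⟨y, rfl⟩ := h.ex2 i x (Subsingleton.elim _ _)
    rw [Subsingleton.elim y 0, post_zero]

lemma SES.covC (h : SES f g) (i : ℕ) (hB : Subsingleton (aExt R X B i))
    (hA : Subsingleton (aExt R X A (i+1))) : Subsingleton (aExt R X C i) :=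
  sub_of fun x => by
    obtain ⟨y, rfl⟩ := h.ex3 i x (Subsingleton.elim _ _)
    rw [Subsingleton.elim y 0, post_zero]

lemma SES.contraA (h : SES f g) (i : ℕ) (hB : Subsingleton (aExt R B Y i))
    (hC : Subsingleton (aExt R C Y (i+1))) : Subsingleton (aExt R A Y i) :=
  sub_of fun x => by
    obtain ⟨y, rfl⟩ := Ext.contravariant_sequence_exact₁ h.short _ x (add_comm 1 i)
      (Subsingleton.elim (α := aExt R C Y (i+1)) _ _)
    rw [Subsingleton.elim (α := aExt R B Y i) y 0, Ext.comp_zero]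

lemma SES.contraB (h : SES f g) (i : ℕ) (hA : Subsingleton (aExt R A Y i))
    (hC : Subsingleton (aExt R C Y i)) : Subsingleton (aExt R B Y i) :=
  sub_of fun x => by
    obtain ⟨y, rfl⟩ := Ext.contravariant_sequence_exact₂ h.short _ x
      (Subsingleton.elim (α := aExt R A Y i) _ _)
    rw [Subsingleton.elim (α := aExt R C Y i) y 0, Ext.comp_zero]

lemma SES.contraC (h : SES f g) (i : ℕ) (hA : Subsingleton (aExt R A Y i))
    (hB : Subsingleton (aExt R B Y (i+1))) : Subsingleton (aExt R C Y (i+1)) :=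
  sub_of fun x => by
    obtain ⟨y, rfl⟩ := Ext.contravariant_sequence_exact₃ h.short _ x
      (Subsingleton.elim (α := aExt R B Y (i+1)) _ _) (add_comm 1 i)
    rw [Subsingleton.elim (α := aExt R A Y i) y 0, Ext.comp_zero]

lemma SES.lift (h : SES f g) (hC : Subsingleton (aExt R C Y 1)) (k : A →ₗ[R] Y) :
    ∃ k' : B →ₗ[R] Y, k' ∘ₗ f = k := by
  obtain ⟨y, hy⟩ := Ext.contravariant_sequence_exact₁ h.short (ModuleCat.of R Y)
    (Ext.mk₀ (ModuleCat.ofHom k)) (n₁ := 1) rfl (Subsingleton.elim (α := aExt R C Y 1) _ _)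
  obtain ⟨z, rfl⟩ := Ext.mk₀_bijective (C := ModuleCat R) _ _ |>.2 y
  rw [Ext.mk₀_comp_mk₀] at hy
  have := Ext.mk₀_bijective (C := ModuleCat R) _ _ |>.1 hy
  exact ⟨z.hom, congrArg ModuleCat.Hom.hom this⟩

lemma SES.contraC1 (h : SES f g) (hl : ∀ k : A →ₗ[R] Y, ∃ k' : B →ₗ[R] Y, k' ∘ₗ f = k)
    (hB : Subsingleton (aExt R B Y 1)) : Subsingleton (aExt R C Y 1) :=
  sub_of fun x => by
    obtain ⟨y, rfl⟩ := Ext.contravariant_sequence_exact₃ h.short _ x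
      (Subsingleton.elim (α := aExt R B Y 1) _ _) (n₀ := 0) rfl
    obtain ⟨z, rfl⟩ := Ext.mk₀_bijective (C := ModuleCat R) _ _ |>.2 y
    obtain ⟨k', hk'⟩ := hl z.hom
    have : z = ModuleCat.ofHom f ≫ ModuleCat.ofHom k' := ModuleCat.hom_ext hk'.symm
    rw [this, ← Ext.mk₀_comp_mk₀, ← Ext.comp_assoc_of_second_deg_zero]
    have h2 := h.short.extClass_comp
    dsimp only at h2
    rw [h2, Ext.zero_comp]

lemma aExt_proj [Module.Projective R X] (i : ℕ) : Subsingleton (aExt R X Y (i+1)) := by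
  have : Projective (ModuleCat.of R X) := (IsProjective.iff_projective (R := R) X).1 inferInstance
  exact sub_of fun x => Ext.eq_zero_of_projective x

lemma aExt_congr_left (e : A ≃ₗ[R] B) (i : ℕ) :
    Subsingleton (aExt R A Y i) ↔ Subsingleton (aExt R B Y i) := by
  have key : ∀ {A B : Type u} [AddCommGroup A] [AddCommGroup B] [Module R A] [Module R B]
      (e : A ≃ₗ[R] B), Subsingleton (aExt R A Y i) → Subsingleton (aExt R B Y i) := by
    intro A B _ _ _ _ e h
    refine sub_of fun x => ?_
    have : x = (Ext.mk₀ (ModuleCat.ofHom e.symm.toLinearMap)).comp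
      ((Ext.mk₀ (ModuleCat.ofHom e.toLinearMap)).comp x (zero_add i)) (zero_add i) := by
      rw [Ext.mk₀_comp_mk₀_assoc]
      have : ModuleCat.ofHom e.symm.toLinearMap ≫ ModuleCat.ofHom e.toLinearMap = 𝟙 _ := by
        ext x; exact e.apply_symm_apply x
      rw [this, Ext.mk₀_id_comp]
    rw [this, Subsingleton.elim (α := aExt R A Y i) ((Ext.mk₀ (ModuleCat.ofHom e.toLinearMap)).comp x _) 0,
      Ext.comp_zero]
  exact ⟨key e, key e.symm⟩

lemma aExt_retract (a : A →ₗ[R] B) (b : B →ₗ[R] A) (h : b ∘ₗ a = LinearMap.id) (i : ℕ)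
    (hB : Subsingleton (aExt R X B i)) : Subsingleton (aExt R X A i) :=
  sub_of fun x => by
    rw [← post_id i x, ← h, ← post_comp, Subsingleton.elim (post X a i x) 0, post_zero]

lemma aExt_congr_right (e : A ≃ₗ[R] B) (i : ℕ) :
    Subsingleton (aExt R X A i) ↔ Subsingleton (aExt R X B i) :=
  ⟨aExt_retract e.symm.toLinearMap e.toLinearMap (by ext; simp) i,
   aExt_retract e.toLinearMap e.symm.toLinearMap (by ext; simp) i⟩

lemma aExt_pi (m : ℕ) (i : ℕ) (h : Subsingleton (aExt R X A i)) :
    Subsingleton (aExt R X (Fin m → A) i) :=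
  sub_of fun x => by
    have : (LinearMap.id : (Fin m → A) →ₗ[R] (Fin m → A)) =
        ∑ j, LinearMap.single R (fun _ : Fin m => A) j ∘ₗ LinearMap.proj j := by
      ext j a k
      simp [Finset.sum_apply, Pi.single_apply]
    rw [← post_id i x, this, post_sum']
    refine Finset.sum_eq_zero fun j _ => ?_
    rw [← post_comp, Subsingleton.elim (post X (LinearMap.proj j) i x) 0, post_zero]

lemma aExt_finproj (i : ℕ) (h : Subsingleton (aExt R X R i)) [Module.Finite R A]
    [Module.Projective R A] : Subsingleton (aExt R X A i) := by
  obtain ⟨m, p, hp⟩ := Module.Finite.exists_fin' R A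
  obtain ⟨s, hs⟩ := Module.projective_lifting_property p LinearMap.id hp
  exact aExt_retract s p hs i (aExt_pi m i h)

lemma SES.ker (g : B →ₗ[R] C) (hg : Function.Surjective g) : SES (LinearMap.ker g).subtype g :=
  ⟨Subtype.val_injective, LinearMap.exact_subtype_ker_map g, hg⟩

lemma SES.quot (N : Submodule R B) : SES N.subtype N.mkQ :=
  ⟨Subtype.val_injective, LinearMap.exact_subtype_mkQ N, N.mkQ_surjective⟩

/-- dual sequence -/
lemma SES.dual (h : SES f g) (hC : Subsingleton (aExt R C R 1)) : SES g.dualMap f.dualMap where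
  inj := LinearMap.dualMap_injective_of_surjective h.surj
  ex := by
    intro φ
    constructor
    · intro hφ
      have h1 : φ ∘ₗ f = 0 := hφ
      have hk : LinearMap.ker g ≤ LinearMap.ker φ := by
        intro x hx
        obtain ⟨a, rfl⟩ := (h.ex x).1 hx
        exact LinearMap.congr_fun h1 a
      refine ⟨(LinearMap.ker g).liftQ φ hk ∘ₗ (g.quotKerEquivOfSurjective h.surj).symm.toLinearMap, ?_⟩
      ext x
      have : (g.quotKerEquivOfSurjective h.surj).symm (g x) = (LinearMap.ker g).mkQ x := by
        rw [LinearEquiv.symm_apply_eq]; rfl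
      simp [LinearMap.dualMap_apply, this]
    · rintro ⟨ψ, rfl⟩
      ext x
      simp [LinearMap.dualMap_apply, h.ex.apply_apply_eq_zero]
  surj := fun k => h.lift hC k

end tool

section gdim
variable {R : Type u} [CommRing R]
variable {M N : Type u} [AddCommGroup M] [Module R M] [AddCommGroup N] [Module R N]

lemma gz_iff : IsGDimZero R M ↔ Module.Finite R M ∧ Module.IsReflexive R M ∧
    (∀ i, Subsingleton (aExt R M R (i+1))) ∧
    (∀ i, Subsingleton (aExt R (Module.Dual R M) R (i+1))) := by
  unfold IsGDimZero
  refine and_congr Iff.rfl (and_congr ⟨fun h => ⟨h⟩, fun h => h.1⟩ (and_congr ?_ ?_))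
  · constructor
    · intro h i; exact (extM_iff _ _).1 (h (i+1) (by omega))
    · intro h i hi
      obtain ⟨j, rfl⟩ := Nat.exists_eq_succ_of_ne_zero hi.ne'
      exact (extM_iff _ _).2 (h j)
  · constructor
    · intro h i; exact (extM_iff _ _).1 (h (i+1) (by omega))
    · intro h i hi
      obtain ⟨j, rfl⟩ := Nat.exists_eq_succ_of_ne_zero hi.ne'
      exact (extM_iff _ _).2 (h j)

lemma gz_congr (e : M ≃ₗ[R] N) (h : IsGDimZero R M) : IsGDimZero R N := by
  rw [gz_iff] at h ⊢
  obtain ⟨h1, h2, h3, h4⟩ := h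
  exact ⟨Module.Finite.equiv e, Module.equiv e, fun i => (aExt_congr_left e _).1 (h3 i),
    fun i => (aExt_congr_left e.symm.dualMap _).1 (h4 i)⟩

lemma gz_proj [Module.Finite R M] [Module.Projective R M] : IsGDimZero R M := by
  rw [gz_iff]
  exact ⟨inferInstance, inferInstance, fun i => aExt_proj i, fun i => aExt_proj i⟩

lemma gd_congr (n : ℕ) : ∀ {M N : Type u} [AddCommGroup M] [Module R M] [AddCommGroup N]
    [Module R N], (M ≃ₗ[R] N) → GDimLE R n (ModuleCat.of R M) → GDimLE R n (ModuleCat.of R N) := by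
  induction n with
  | zero => intro M N _ _ _ _ e h; exact gz_congr e h
  | succ n ih =>
    intro M N _ _ _ _ e h
    obtain ⟨G, f, hG, hf, hK⟩ := h
    refine ⟨G, e.toLinearMap ∘ₗ f, hG, e.surjective.comp hf, ?_⟩
    refine ih (LinearEquiv.ofEq _ _ ?_) hK
    ext x
    change f x = 0 ↔ e (f x) = 0
    simp

lemma gd_finite (n : ℕ) (h : GDimLE R n (ModuleCat.of R M)) : Module.Finite R M := by
  cases n with
  | zero => exact h.1
  | succ n =>
    obtain ⟨G, f, hG, hf, hK⟩ := h
    have := hG.1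
    exact Module.Finite.of_surjective f hf

lemma gd_vanish (n : ℕ) : ∀ {M : Type u} [AddCommGroup M] [Module R M],
    GDimLE R n (ModuleCat.of R M) → ∀ i, n ≤ i → Subsingleton (aExt R M R (i+1)) := by
  induction n with
  | zero => intro M _ _ h i _; exact (gz_iff.1 h).2.2.1 i
  | succ n ih =>
    intro M _ _ h i hi
    obtain ⟨G, f, hG, hf, hK⟩ := h
    have hG' := gz_iff.1 hG
    obtain ⟨j, rfl⟩ : ∃ j, i = j + 1 := ⟨i-1, by omega⟩
    exact (SES.ker f hf).contraC (j+1) (ih hK j (by omega)) (hG'.2.2.1 _)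

lemma gd_zero_of_vanish (n : ℕ) : ∀ {M : Type u} [AddCommGroup M] [Module R M],
    GDimLE R n (ModuleCat.of R M) → (∀ i, Subsingleton (aExt R M R (i+1))) → IsGDimZero R M := by
  induction n with
  | zero => intro M _ _ h _; exact h
  | succ n ih =>
    intro M _ _ h hv
    have hfin := gd_finite (n+1) h
    obtain ⟨G, f, hG, hf, hK⟩ := h
    obtain ⟨G1, G2, G3, G4⟩ := gz_iff.1 hG
    have hS := SES.ker f hf
    have hKz := ih hK fun i => hS.contraA (i+1) (G3 _) (hv _)
    obtain ⟨K1, K2, K3, K4⟩ := gz_iff.1 hKz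
    have hD := hS.dual (hv 0)
    have hDD := hD.dual (K4 0)
    refine gz_iff.2 ⟨hfin, ⟨?_, ?_⟩, hv, fun i => hD.contraA (i+1) (G4 _) (K4 _)⟩
    · rw [injective_iff_map_eq_zero]
      intro x hx
      obtain ⟨y, rfl⟩ := hf x
      have h1 : f.dualMap.dualMap (Module.Dual.eval R G y) = 0 := hx
      obtain ⟨z, hz⟩ := (hDD.ex _).1 h1
      obtain ⟨w, rfl⟩ := K2.1.2 z
      have h2 : Module.Dual.eval R G w.1 = Module.Dual.eval R G y := hz
      rw [← G2.1.1 h2]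
      exact w.2
    · intro z
      obtain ⟨w, rfl⟩ := hDD.surj z
      obtain ⟨y, rfl⟩ := G2.1.2 w
      exact ⟨f y, rfl⟩
end gdim

section loc
variable {A : Type u} [CommRing A] [IsNoetherianRing A] [IsLocalRing A]

/-- residue field as a module -/
abbrev kk (A : Type u) [CommRing A] [IsLocalRing A] : Type u := A ⧸ IsLocalRing.maximalIdeal A

lemma dual_fin {X : Type u} [AddCommGroup X] [Module A X] (_ : Module.Finite A X) :
    Module.Finite A (Module.Dual A X) := inferInstance

lemma kk_smul (a : A) (ha : a ∈ IsLocalRing.maximalIdeal A) (x : kk A) : a • x = 0 := by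
  obtain ⟨y, rfl⟩ := Ideal.Quotient.mk_surjective x
  have : a • (Ideal.Quotient.mk (IsLocalRing.maximalIdeal A)) y =
    (Ideal.Quotient.mk (IsLocalRing.maximalIdeal A)) (a * y) := rfl
  rw [this, Ideal.Quotient.eq_zero_iff_mem]
  exact Ideal.mul_mem_right _ _ ha

lemma key_b {t : ℕ} (ht : ∀ j < t, Subsingleton (aExt A (kk A) A j)) (j : ℕ) (hj : j < t) :
    ∀ (Y : Type u) [AddCommGroup Y] [Module A Y] [Module.Finite A Y]
    (_ : ∀ i, Subsingleton (aExt A Y A (i+1))),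
      Subsingleton (aExt A (kk A) (Module.Dual A Y) j) := by
  induction j using Nat.strong_induction_on with
  | _ j ih =>
    intro Y _ _ _ hY
    obtain ⟨m, π, hπ⟩ := Module.Finite.exists_fin' A Y
    have hS := SES.ker π hπ
    have hD := hS.dual (hY 0)
    refine hD.covA' j (fun j' hj' => ih j' hj' (hj'.trans hj) _ ?_) ?_
    · intro i; exact hS.contraA (i+1) (aExt_proj _) (hY _)
    · exact aExt_finproj j (ht j hj)

lemma key_d {t : ℕ} (ht : ∀ j < t, Subsingleton (aExt A (kk A) A j))
    {F Y : Type u} [AddCommGroup Y] [Module A Y] [Module.Finite A Y]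
    [AddCommGroup F] [Module A F] [Module.Finite A F] [Module.Projective A F]
    (hY : ∀ i, Subsingleton (aExt A Y A (i+1))) (π : F →ₗ[A] Y) (hπ : Function.Surjective π)
    (x : aExt A (kk A) (Module.Dual A Y) t) (hx : post (kk A) π.dualMap t x = 0) : x = 0 := by
  have hS := SES.ker π hπ
  have hD := hS.dual (hY 0)
  refine hD.inj_of' t (fun j hj => key_b ht j hj _ fun i => ?_) x hx
  exact hS.contraA (i+1) (aExt_proj _) (hY _)

lemma key_e {t m : ℕ} (h : Module.Dual A (Fin m → A))
    (hh : ∀ x, h x ∈ IsLocalRing.maximalIdeal A) (c : aExt A (kk A) A t) :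
    post (kk A) (LinearMap.toSpanSingleton A _ h) t c = 0 := by
  have : LinearMap.toSpanSingleton A _ h =
      ∑ j, h (Pi.single j 1) • LinearMap.toSpanSingleton A (Module.Dual A (Fin m → A))
        (LinearMap.proj j) := by
    ext j
    simp [LinearMap.sum_apply, Pi.single_apply]
  rw [this, post_sum']
  exact Finset.sum_eq_zero fun j _ => post_smul_zero _ (kk_smul _ (hh _)) _ _ _

lemma key_c {t : ℕ} (ht : ∀ j < t, Subsingleton (aExt A (kk A) A j))
    (c : aExt A (kk A) A t) (hc : c ≠ 0)
    {X Y : Type u} [AddCommGroup Y] [Module A Y] [Module.Finite A Y]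
    [AddCommGroup X] [Module A X] [Module.Finite A X]
    (hX : ∀ i, Subsingleton (aExt A X A (i+1))) (hY : ∀ i, Subsingleton (aExt A Y A (i+1)))
    (φ : X →ₗ[A] Y) (hφ : ¬ Function.Surjective φ) :
    ∃ β : aExt A (kk A) (Module.Dual A Y) t, β ≠ 0 ∧ post (kk A) φ.dualMap t β = 0 := by
  obtain ⟨θ, hθ, hθφ⟩ : ∃ θ : Y →ₗ[A] kk A, Function.Surjective θ ∧ θ ∘ₗ φ = 0 := by
    have h1 : LinearMap.range φ ≠ ⊤ := fun h => hφ (LinearMap.range_eq_top.1 h)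
    obtain ⟨N, hN, hle⟩ := (eq_top_or_exists_le_coatom (LinearMap.range φ)).resolve_left h1
    have hs : IsSimpleModule A (Y ⧸ N) := isSimpleModule_iff_isCoatom.2 hN
    obtain ⟨I, hI, ⟨e⟩⟩ := isSimpleModule_iff_quot_maximal.1 hs
    obtain rfl := IsLocalRing.eq_maximalIdeal hI
    refine ⟨e.toLinearMap ∘ₗ N.mkQ, e.surjective.comp N.mkQ_surjective, ?_⟩
    ext x
    have : N.mkQ (φ x) = 0 := by
      rw [Submodule.mkQ_apply, Submodule.Quotient.mk_eq_zero]; exact hle ⟨x, rfl⟩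
    simp only [LinearMap.comp_apply, this, map_zero, LinearMap.zero_apply]
  obtain ⟨m, π, hπ⟩ := Module.Finite.exists_fin' A Y
  let q : A →ₗ[A] kk A := (IsLocalRing.maximalIdeal A).mkQ
  have hq : ∀ a, q a = 0 ↔ a ∈ IsLocalRing.maximalIdeal A := fun a =>
    Submodule.Quotient.mk_eq_zero _
  obtain ⟨f, hf⟩ := Module.projective_lifting_property q (θ ∘ₗ π)
    (Submodule.mkQ_surjective _)
  have hf' : ∀ x, q (f x) = θ (π x) := fun x => LinearMap.congr_fun hf x
  let α := post (kk A) (LinearMap.toSpanSingleton A _ f : A →ₗ[A] Module.Dual A (Fin m → A)) t c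
  have hS := SES.ker π hπ
  have hY1 : ∀ i, Subsingleton (aExt A (LinearMap.ker π) A (i+1)) := fun i =>
    hS.contraA (i+1) (aExt_proj _) (hY _)
  have hD := hS.dual (hY 0)
  have hcomp : ∀ {m' : ℕ} (ψ : (Fin m' → A) →ₗ[A] (Fin m → A)), (∀ x, θ (π (ψ x)) = 0) →
      post (kk A) ψ.dualMap t α = 0 := by
    intro m' ψ hψ
    rw [post_comp]
    have : ψ.dualMap ∘ₗ LinearMap.toSpanSingleton A _ f =
      LinearMap.toSpanSingleton A _ (f ∘ₗ ψ) := by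
      ext; simp [LinearMap.dualMap_apply]
    rw [this]
    exact key_e _ (fun x => (hq _).1 ((hf' (ψ x)).trans (hψ x))) c
  have hα : post (kk A) (LinearMap.ker π).subtype.dualMap t α = 0 := by
    obtain ⟨m1, π1, hπ1⟩ := Module.Finite.exists_fin' A (LinearMap.ker π)
    refine key_d ht hY1 π1 hπ1 _ ?_
    rw [post_comp]
    refine hcomp ((LinearMap.ker π).subtype ∘ₗ π1) fun x => ?_
    have : π ((LinearMap.ker π).subtype (π1 x)) = 0 := (π1 x).2
    rw [LinearMap.comp_apply, this, map_zero]
  obtain ⟨β, hβ⟩ := hD.ex2 t α hα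
  refine ⟨β, ?_, ?_⟩
  · rintro rfl
    rw [post_zero] at hβ
    obtain ⟨y, hy⟩ := hθ (q 1)
    obtain ⟨b, rfl⟩ := hπ y
    have hu : IsUnit (f b) := by
      by_contra hu
      have h1 : q (f b) = 0 := (hq _).2 hu
      rw [hf', hy, hq] at h1
      exact h1 isUnit_one
    obtain ⟨v, hv⟩ := hu.exists_left_inv
    apply hc
    let ev : Module.Dual A (Fin m → A) →ₗ[A] A := v • Module.Dual.eval A _ b
    have h2 : post (kk A) ev t α = 0 := by rw [← hβ, post_zero]
    rw [post_comp] at h2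
    have h3 : ev ∘ₗ LinearMap.toSpanSingleton A _ f = LinearMap.id := by
      ext; simp [ev, hv]
    rw [h3, post_id] at h2
    exact h2
  · obtain ⟨mX, πX, hπX⟩ := Module.Finite.exists_fin' A X
    obtain ⟨ψ, hψ⟩ := Module.projective_lifting_property π (φ ∘ₗ πX) hπ
    refine key_d ht hX πX hπX _ ?_
    rw [post_comp]
    have h1 : πX.dualMap ∘ₗ φ.dualMap = ψ.dualMap ∘ₗ π.dualMap := by
      have h2 : πX.dualMap ∘ₗ φ.dualMap = (φ ∘ₗ πX).dualMap := rfl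
      rw [h2, ← hψ]; rfl
    rw [h1, ← post_comp, hβ]
    refine hcomp ψ fun x => ?_
    have h2 : π (ψ x) = φ (πX x) := LinearMap.congr_fun hψ x
    rw [h2]
    exact LinearMap.congr_fun hθφ (πX x)

lemma gz_kvanish {t : ℕ} (ht : ∀ j < t, Subsingleton (aExt A (kk A) A j)) {G : Type u}
    [AddCommGroup G] [Module A G] (hG : IsGDimZero A G) (j : ℕ) (hj : j < t) :
    Subsingleton (aExt A (kk A) G j) := by
  obtain ⟨G1, G2, G3, G4⟩ := gz_iff.1 hG
  exact (aExt_congr_right (Module.evalEquiv A G) j).2 (key_b ht j hj _ G4)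

lemma key_f {t : ℕ} (ht : ∀ j < t, Subsingleton (aExt A (kk A) A j))
    (c : aExt A (kk A) A t) (hc : c ≠ 0) (s : ℕ) :
    ∀ (g : ℕ) (N : Type u) [AddCommGroup N] [Module A N] (_ : GDimLE A g (ModuleCat.of A N))
    (_ : ¬ Subsingleton (aExt A N A (s+1))) (_ : ∀ i, s < i → Subsingleton (aExt A N A (i+1))),
    ∃ r, t = r + s + 1 ∧ ¬ Subsingleton (aExt A (kk A) N r) := by
  induction s with
  | zero =>
    intro g N _ _ hg hs hv
    have hNf := gd_finite g hg
    cases g with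
    | zero => exact absurd ((gz_iff.1 hg).2.2.1 0) hs
    | succ g =>
      obtain ⟨G, f, hG, hf, hK⟩ := hg
      obtain ⟨G1, G2, G3, G4⟩ := gz_iff.1 hG
      have hS := SES.ker f hf
      have hKz := gd_zero_of_vanish g hK fun i => hS.contraA (i+1) (G3 _) (hv (i+1) (by omega))
      obtain ⟨K1, K2, K3, K4⟩ := gz_iff.1 hKz
      let ι : LinearMap.ker f →ₗ[A] G := (LinearMap.ker f).subtype
      have hns : ¬ Function.Surjective ι.dualMap := fun h => hs (hS.contraC1 (fun k => h k) (G3 0))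
      have F1 := dual_fin K1
      have F2 := dual_fin G1
      obtain ⟨β, hβ, hβ0⟩ := key_c ht c hc G4 K4 ι.dualMap hns
      let eK := Module.evalEquiv A (LinearMap.ker f)
      let eG := Module.evalEquiv A G
      let β' := post (kk A) eK.symm.toLinearMap t β
      have hβ' : β' ≠ 0 := by
        intro h
        apply hβ
        have h1 : post (kk A) eK.toLinearMap t β' = 0 := by rw [h, post_zero]
        rw [post_comp, LinearEquiv.comp_symm, post_id] at h1
        exact h1
      have h0 : post (kk A) ι t β' = 0 := by
        have h1 : ι ∘ₗ eK.symm.toLinearMap = eG.symm.toLinearMap ∘ₗ ι.dualMap.dualMap := by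
          apply LinearMap.ext
          intro z
          obtain ⟨w, rfl⟩ := eK.surjective z
          change ι (eK.symm (eK w)) = eG.symm (eG (ι w))
          rw [eK.symm_apply_apply, eG.symm_apply_apply]
        rw [post_comp, h1, ← post_comp, hβ0, post_zero]
      cases t with
      | zero => exact absurd (post_inj0 hS.inj β' h0) hβ'
      | succ r =>
        refine ⟨r, rfl, fun hsub => ?_⟩
        exact hβ' (hS.inj_of r hsub β' h0)
  | succ s ih =>
    intro g N _ _ hg hs hv
    cases g with
    | zero => exact absurd ((gz_iff.1 hg).2.2.1 (s+1)) hs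
    | succ g =>
      obtain ⟨G, f, hG, hf, hK⟩ := hg
      obtain ⟨G1, G2, G3, G4⟩ := gz_iff.1 hG
      have hS := SES.ker f hf
      obtain ⟨r, hr, hr'⟩ := ih g (LinearMap.ker f) hK
        (fun h => hs (hS.contraC (s+1) h (G3 _)))
        (fun i hi => hS.contraA (i+1) (G3 _) (hv (i+1) (by omega)))
      cases r with
      | zero => exact absurd (covA0 hS.inj (gz_kvanish ht hG 0 (by omega))) hr'
      | succ r =>
        refine ⟨r, by omega, fun h => hr' ?_⟩
        exact hS.covA r h (gz_kvanish ht hG (r+1) (by omega))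

lemma key' {t : ℕ} (ht : ∀ j < t, Subsingleton (aExt A (kk A) A j))
    (hc : ¬ Subsingleton (aExt A (kk A) A t)) (g : ℕ) (N : Type u) [AddCommGroup N] [Module A N]
    (hg : GDimLE A g (ModuleCat.of A N)) (i : ℕ) (hi : t ≤ i) :
    Subsingleton (aExt A N A (i+1)) := by
  obtain ⟨c, hc⟩ : ∃ c : aExt A (kk A) A t, c ≠ 0 := by
    by_contra! h
    exact hc (sub_of h)
  have key : ∀ d i, t ≤ i → g ≤ i + d → Subsingleton (aExt A N A (i+1)) := by
    intro d
    induction d with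
    | zero => intro i _ h; exact gd_vanish g hg i h
    | succ d ih =>
      intro i hi hd
      by_contra hs
      obtain ⟨r, hr, -⟩ := key_f ht c hc i g N hg hs fun j hj => by
        obtain ⟨j', rfl⟩ : ∃ j', j = j' + 1 := ⟨j-1, by omega⟩
        exact ih (j'+1) (by omega) (by omega)
      omega
  exact key g i hi (by omega)

/-- Key: a module of finite G-dimension which embeds in a projective. -/
lemma key_main (g : ℕ) (M Q : Type u) [AddCommGroup M] [Module A M] [AddCommGroup Q] [Module A Q]
    [Module.Finite A Q] [Module.Projective A Q] (f : M →ₗ[A] Q) (hf : Function.Injective f)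
    (hg : GDimLE A g (ModuleCat.of A M)) (n : ℕ) (hn : ¬ Subsingleton (aExt A M A (n+1))) (j : ℕ)
    (hj : j ≤ n+1) : Subsingleton (aExt A (kk A) A j) := by
  classical
  by_contra hj'
  have hex : ∃ j, ¬ Subsingleton (aExt A (kk A) A j) := ⟨j, hj'⟩
  let t := Nat.find hex
  have ht : ¬ Subsingleton (aExt A (kk A) A t) := Nat.find_spec hex
  have ht' : ∀ j < t, Subsingleton (aExt A (kk A) A j) := fun j hj =>
    not_not.1 (Nat.find_min hex hj)
  have htn : t ≤ n+1 := (Nat.find_min' hex hj').trans hj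
  apply hn
  have hS : SES f (LinearMap.range f).mkQ :=
    ⟨hf, LinearMap.exact_map_mkQ_range f, Submodule.mkQ_surjective _⟩
  refine hS.contraA (n+1) (aExt_proj n) ?_
  refine key' ht' ht (g+1) _ ?_ (n+1) htn
  refine ⟨ModuleCat.of A Q, (LinearMap.range f).mkQ, gz_proj, Submodule.mkQ_surjective _, ?_⟩
  refine gd_congr g ((LinearEquiv.ofInjective f hf).trans (LinearEquiv.ofEq _ _ ?_)) hg
  exact (Submodule.ker_mkQ _).symm
end loc

section localization
variable {R : Type u} [CommRing R] (S : Submonoid R)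
variable {X Y W : Type u} [AddCommGroup X] [Module R X] [AddCommGroup Y] [Module R Y]
  [AddCommGroup W] [Module R W]

/-- localized map -/
noncomputable abbrev lm (f : X →ₗ[R] Y) : LocalizedModule S X →ₗ[Localization S] LocalizedModule S Y :=
  LocalizedModule.map S f

/-- extensionality for maps out of a localized module -/
lemma lext {V : Type u} [AddCommGroup V] [Module (Localization S) V]
    {f g : LocalizedModule S X →ₗ[Localization S] V}
    (h : ∀ x, f (LocalizedModule.mk x 1) = g (LocalizedModule.mk x 1)) : f = g := by
  ext z
  induction z using LocalizedModule.induction_on with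
  | _ m s =>
    have h1 : LocalizedModule.mk m s = (Localization.mk 1 s : Localization S) •
      LocalizedModule.mk m (1 : S) := by
      rw [LocalizedModule.mk_smul_mk, one_smul, mul_one]
    rw [h1, map_smul, map_smul, h]

lemma lm_comp (f : X →ₗ[R] Y) (g : Y →ₗ[R] W) : lm S (g ∘ₗ f) = lm S g ∘ₗ lm S f := by
  apply lext
  intro x
  simp [lm]

lemma lm_exact {f : X →ₗ[R] Y} {g : Y →ₗ[R] W} (h : Function.Exact f g) :
    Function.Exact (lm S f) (lm S g) := LocalizedModule.map_exact S f g h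

lemma SES.loc {f : X →ₗ[R] Y} {g : Y →ₗ[R] W} (h : SES f g) : SES (lm S f) (lm S g) :=
  ⟨LocalizedModule.map_injective S f h.inj, lm_exact S h.ex, LocalizedModule.map_surjective S g h.surj⟩

/-- localized functional -/
noncomputable def ld : (X →ₗ[R] R) →ₗ[R] (LocalizedModule S X →ₗ[Localization S] Localization S) :=
  IsLocalizedModule.mapExtendScalars S (LocalizedModule.mkLinearMap S X)
    (Algebra.linearMap R (Localization S)) (Localization S)

lemma ld_mk (f : X →ₗ[R] R) (x : X) :
    ld S f (LocalizedModule.mk x 1) = algebraMap R (Localization S) (f x) :=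
  IsLocalizedModule.map_apply S (LocalizedModule.mkLinearMap S X)
    (Algebra.linearMap R (Localization S)) f x

lemma ld_comp (f : X →ₗ[R] Y) (g : Y →ₗ[R] R) : ld S (g ∘ₗ f) = ld S g ∘ₗ lm S f := by
  apply lext
  intro x
  rw [ld_mk]
  change _ = ld S g (lm S f (LocalizedModule.mk x 1))
  rw [lm, LocalizedModule.map_mk, ld_mk]
  rfl

instance ld_loc [IsNoetherianRing R] [Module.Finite R X] : IsLocalizedModule S (ld S (X := X)) := by
  have : Module.FinitePresentation R X := Module.finitePresentation_of_finite R X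
  exact Module.FinitePresentation.isLocalizedModule_mapExtendScalars _ _ _ _

lemma ld_surj [IsNoetherianRing R] [Module.Finite R X]
    (φ : LocalizedModule S X →ₗ[Localization S] Localization S) :
    ∃ (s : S) (f : X →ₗ[R] R), ld S f = (s : R) • φ := by
  obtain ⟨⟨f, s⟩, h⟩ := IsLocalizedModule.surj S (ld S (X := X)) φ
  exact ⟨s, f, h.symm⟩

lemma ld_inj [IsNoetherianRing R] [Module.Finite R X] (f g : X →ₗ[R] R) (h : ld S f = ld S g) :
    ∃ s : S, (s : R) • f = (s : R) • g := IsLocalizedModule.exists_of_eq h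

lemma unit_cancel {V : Type u} [AddCommGroup V] [Module R V] [Module (Localization S) V]
    [IsScalarTower R (Localization S) V] (s : S) (v : V) :
    (Localization.mk 1 s : Localization S) • ((s : R) • v) = v := by
  rw [← algebraMap_smul (Localization S) (s : R) v, smul_smul, ← Localization.mk_one_eq_algebraMap,
    Localization.mk_mul, one_mul, mul_one, Localization.mk_self, one_smul]

/-- localization commutes with duals -/
noncomputable def ldEquiv [IsNoetherianRing R] [Module.Finite R X] :
    LocalizedModule S (Module.Dual R X) ≃ₗ[Localization S]
      Module.Dual (Localization S) (LocalizedModule S X) :=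
  (IsLocalizedModule.iso S (ld S (X := X))).extendScalarsOfIsLocalization S (Localization S)

lemma ldEquiv_mk [IsNoetherianRing R] [Module.Finite R X] (f : Module.Dual R X) :
    ldEquiv S (LocalizedModule.mk f 1) = ld S f := by
  change IsLocalizedModule.iso S (ld S (X := X)) (LocalizedModule.mk f 1) = _
  rw [IsLocalizedModule.iso_apply_mk]
  simp

lemma aExt_loc [IsNoetherianRing R] (i : ℕ) : ∀ (X : Type u) [AddCommGroup X] [Module R X]
    [Module.Finite R X], Subsingleton (aExt R X R (i+1)) →
    Subsingleton (aExt (Localization S) (LocalizedModule S X) (Localization S) (i+1)) := by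
  induction i with
  | zero =>
    intro X _ _ _ h
    obtain ⟨m, π, hπ⟩ := Module.Finite.exists_fin' R X
    have hS := SES.ker π hπ
    refine (hS.loc S).contraC1 ?_ (aExt_proj 0)
    intro φ
    obtain ⟨s, f, hf⟩ := ld_surj S φ
    obtain ⟨g, hg⟩ := hS.lift h f
    refine ⟨(Localization.mk 1 s : Localization S) • ld S g, ?_⟩
    rw [LinearMap.smul_comp, ← ld_comp, hg, hf]
    exact unit_cancel S s φ
  | succ i ih =>
    intro X _ _ _ h
    obtain ⟨m, π, hπ⟩ := Module.Finite.exists_fin' R X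
    have hS := SES.ker π hπ
    exact (hS.loc S).contraC (i+1) (ih _ (hS.contraA (i+1) (aExt_proj i) h)) (aExt_proj _)

lemma gz_loc [IsNoetherianRing R] (h : IsGDimZero R X) :
    IsGDimZero (Localization S) (LocalizedModule S X) := by
  obtain ⟨h1, h2, h3, h4⟩ := gz_iff.1 h
  refine gz_iff.2 ⟨inferInstance, ⟨?_⟩, fun i => aExt_loc S i X (h3 i), fun i => ?_⟩
  · have key : (ldEquiv S (X := X)).toLinearMap.dualMap ∘ₗ
        Module.Dual.eval (Localization S) (LocalizedModule S X) =
        (ldEquiv S (X := Module.Dual R X)).toLinearMap ∘ₗ lm S (Module.Dual.eval R X) := by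
      apply lext
      intro x
      apply lext
      intro f
      simp only [LinearMap.comp_apply, LinearEquiv.coe_coe]
      rw [lm, LocalizedModule.map_mk, ldEquiv_mk, ld_mk]
      change (ldEquiv S (LocalizedModule.mk f 1)) (LocalizedModule.mk x 1) = _
      rw [ldEquiv_mk, ld_mk]; rfl
    have hb : Function.Bijective ((ldEquiv S (X := X)).toLinearMap.dualMap ∘ₗ
        Module.Dual.eval (Localization S) (LocalizedModule S X)) := by
      rw [key]
      exact (ldEquiv S (X := Module.Dual R X)).bijective.comp
        ⟨LocalizedModule.map_injective S _ h2.1.1, LocalizedModule.map_surjective S _ h2.1.2⟩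
    exact (Function.Bijective.of_comp_iff' (ldEquiv S (X := X)).dualMap.bijective _).1 hb
  · exact (aExt_congr_left (ldEquiv S (X := X)) _).1 (aExt_loc S i _ (h4 i))

lemma gd_loc [IsNoetherianRing R] (n : ℕ) : ∀ (X : Type u) [AddCommGroup X] [Module R X],
    GDimLE R n (ModuleCat.of R X) →
    GDimLE (Localization S) n (ModuleCat.of (Localization S) (LocalizedModule S X)) := by
  induction n with
  | zero => intro X _ _ h; exact gz_loc S h
  | succ n ih =>
    intro X _ _ h
    obtain ⟨G, f, hG, hf, hK⟩ := h
    have hS := (SES.ker f hf).loc S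
    refine ⟨ModuleCat.of _ (LocalizedModule S G), lm S f, gz_loc S hG, hS.surj, ?_⟩
    refine gd_congr n ((LinearEquiv.ofInjective _ hS.inj).trans (LinearEquiv.ofEq _ _ ?_))
      (ih _ hK)
    exact hS.ex.linearMap_ker_eq.symm

namespace PRes
variable {M : Type u} [AddCommGroup M] [Module R M]

/-- localized resolution -/
noncomputable def loc (Q : PRes R M) : PRes (Localization S) (LocalizedModule S M) where
  P i := ModuleCat.of _ (LocalizedModule S (Q.P i))
  projective i := by
    have := Q.projective i
    exact inferInstanceAs (Module.Projective (Localization S) (LocalizedModule S (Q.P i)))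
  finite i := by
    have := Q.finite i
    exact inferInstanceAs (Module.Finite (Localization S) (LocalizedModule S (Q.P i)))
  d i := lm S (Q.d i)
  ε := lm S Q.ε
  surj := LocalizedModule.map_surjective S _ Q.surj
  exact0 := ((lm_exact S (LinearMap.exact_iff.2 Q.exact0.symm)).linearMap_ker_eq).symm
  exact i := ((lm_exact S (LinearMap.exact_iff.2 (Q.exact i).symm)).linearMap_ker_eq).symm

lemma loc_zero [IsNoetherianRing R] (Q : PRes R M) (i : ℕ)
    (h : Subsingleton (extM (Localization S) (i+1) (LocalizedModule S M) (Localization S)))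
    (f : Q.P (i+1) →ₗ[R] R) (hf : f ∈ Q.K (i+1)) : ∃ s : S, (s : R) • f ∈ Q.Z i := by
  have hfin := Q.finite
  have h1 := ((Q.loc S).extM_iff' (Localization S) i).1 h
  have hf0 : f ∘ₗ Q.d (i+1) = 0 := hf
  obtain ⟨g, hg⟩ := h1 (ld S f) (by
    change ld S f ∘ₗ lm S (Q.d (i+1)) = 0
    rw [← ld_comp, hf0, map_zero])
  change (LocalizedModule S (Q.P i)) →ₗ[Localization S] Localization S at g
  change g ∘ₗ lm S (Q.d i) = ld S f at hg
  have := hfin i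
  have := hfin (i+1)
  obtain ⟨s, g', hg'⟩ := ld_surj S g
  have h2 : ld S (g' ∘ₗ Q.d i) = ld S ((s : R) • f) := by
    rw [ld_comp, hg', map_smul, LinearMap.smul_comp, hg]
  obtain ⟨s', hs'⟩ := ld_inj S _ _ h2
  refine ⟨s' * s, (s' : R) • g', ?_⟩
  change ((s' : R) • g') ∘ₗ Q.d i = _
  rw [LinearMap.smul_comp, hs', smul_smul]; rfl
end PRes
end localization

section shift
variable {R : Type u} [CommRing R]

lemma SES.subQ {V : Type u} [AddCommGroup V] [Module R V] (K Z : Submodule R V) (h : Z ≤ K) :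
    SES (Submodule.inclusion h) ((Z.comap K.subtype).mkQ) where
  inj := Submodule.inclusion_injective h
  ex := by
    rw [LinearMap.exact_iff, Submodule.ker_mkQ]
    ext x
    constructor
    · intro hx
      exact ⟨⟨x.1, hx⟩, rfl⟩
    · rintro ⟨y, rfl⟩
      exact y.2
  surj := Submodule.mkQ_surjective _

lemma SES.kr {V W : Type u} [AddCommGroup V] [Module R V] [AddCommGroup W] [Module R W]
    (f : V →ₗ[R] W) (K : Submodule R V) (Z : Submodule R W) (hK : K = LinearMap.ker f)
    (hZ : Z = LinearMap.range f) : ∃ g : V →ₗ[R] Z, SES K.subtype g := by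
  subst hK hZ
  refine ⟨f.rangeRestrict, Subtype.val_injective, ?_, f.surjective_rangeRestrict⟩
  rw [LinearMap.exact_iff, LinearMap.ker_rangeRestrict, Submodule.range_subtype]

section abstractShift
variable (L : ℕ → Type u) [∀ i, AddCommGroup (L i)] [∀ i, Module R (L i)]
  (δ : ∀ i, L i →ₗ[R] L (i+1)) (hδ : ∀ i, LinearMap.range (δ i) ≤ LinearMap.ker (δ (i+1)))
variable (S : Submonoid R) (X : Type u) [AddCommGroup X] [Module (Localization S) X]

lemma ses1 (i : ℕ) : ∃ g : L i →ₗ[R] LinearMap.range (δ i), SES (LinearMap.ker (δ i)).subtype g :=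
  SES.kr (δ i) _ _ rfl rfl

lemma locZ0 (i : ℕ)
    (h : Subsingleton (aExt (Localization S) X (LocalizedModule S (L (i+1))) 0)) :
    Subsingleton (aExt (Localization S) X (LocalizedModule S (LinearMap.range (δ i))) 0) :=
  covA0 (LocalizedModule.map_injective S (LinearMap.range (δ i)).subtype Subtype.val_injective) h

lemma shift0 (m : ℕ) (hm : LinearMap.range (δ m) ≤ LinearMap.ker (δ (m+1)))
    (hX : ∀ i, ∀ j ≤ m+1, Subsingleton (aExt (Localization S) X (LocalizedModule S (L i)) j)) :
    Subsingleton (aExt (Localization S) X (LocalizedModule S (LinearMap.range (δ m))) 1) ↔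
    Subsingleton (aExt (Localization S) X (LocalizedModule S
      (subQ (LinearMap.ker (δ (m+1))) (LinearMap.range (δ m)))) 0) := by
  obtain ⟨g, hg⟩ := ses1 L δ (m+1)
  have K0 : Subsingleton (aExt (Localization S) X (LocalizedModule S
      (LinearMap.ker (δ (m+1)))) 0) :=
    covA0 (hg.loc S).inj (hX _ 0 (by omega))
  have K1 : Subsingleton (aExt (Localization S) X (LocalizedModule S
      (LinearMap.ker (δ (m+1)))) 1) :=
    (hg.loc S).covA 0 (locZ0 L δ S X _ (hX _ 0 (by omega))) (hX _ 1 (by omega))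
  have hE := (SES.subQ _ _ hm).loc S
  exact ⟨fun h => hE.covC 0 K0 h, fun h => hE.covA 0 h K1⟩

lemma shift (m : ℕ) (hm : LinearMap.range (δ m) ≤ LinearMap.ker (δ (m+1)))
    (hM : ∀ i < m, LinearMap.ker (δ (i+1)) = LinearMap.range (δ i))
    (hX : ∀ i, ∀ j ≤ m+1, Subsingleton (aExt (Localization S) X (LocalizedModule S (L i)) j))
    (i : ℕ) : ∀ t, i + t = m →
    (∀ j ≤ i, Subsingleton (aExt (Localization S) X (LocalizedModule S
      (LinearMap.range (δ t))) j)) ∧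
    (Subsingleton (aExt (Localization S) X (LocalizedModule S (LinearMap.range (δ t))) (i+1)) ↔
    Subsingleton (aExt (Localization S) X (LocalizedModule S
      (subQ (LinearMap.ker (δ (m+1))) (LinearMap.range (δ m)))) 0)) := by
  induction i with
  | zero =>
    intro t ht
    obtain rfl : t = m := by omega
    refine ⟨fun j hj => ?_, shift0 L δ S X t hm hX⟩
    obtain rfl : j = 0 := by omega
    exact locZ0 L δ S X t (hX _ 0 (by omega))
  | succ i ih =>
    intro t ht
    obtain ⟨h1, h2⟩ := ih (t+1) (by omega)
    obtain ⟨g, hg⟩ := ses1 L δ (t+1)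
    rw [hM t (by omega)] at hg
    have hL := hg.loc S
    constructor
    · intro j hj
      cases j with
      | zero => exact locZ0 L δ S X t (hX _ 0 (by omega))
      | succ j => exact hL.covA j (h1 j (by omega)) (hX _ _ (by omega))
    · rw [← h2]
      exact ⟨fun h => hL.covC (i+1) (hX _ _ (by omega)) h,
        fun h => hL.covA (i+1) h (hX _ _ (by omega))⟩

end abstractShift

namespace PRes
variable {M : Type u} [AddCommGroup M] [Module R M]

lemma Z_le_K (Q : PRes R M) (i : ℕ) : Q.Z i ≤ Q.K (i+1) := by
  rintro _ ⟨y, rfl⟩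
  change (y ∘ₗ Q.d i) ∘ₗ Q.d (i+1) = 0
  rw [LinearMap.comp_assoc, Q.dd, LinearMap.comp_zero]

lemma K_eq_Z (Q : PRes R M) (i : ℕ) (h : Subsingleton (extM R (i+1) M R)) : Q.K (i+1) = Q.Z i :=
  le_antisymm (fun f hf => (Q.extM_iff' R i).1 h f hf) (Q.Z_le_K i)

end PRes
end shift

section ass
variable {R : Type u} [CommRing R] [IsNoetherianRing R]

lemma ass_local {A : Type u} [CommRing A] [IsLocalRing A] [IsNoetherianRing A] (N : Type u)
    [AddCommGroup N] [Module A N] :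
    IsLocalRing.maximalIdeal A ∈ associatedPrimes A N ↔ ¬ Subsingleton (aExt A (kk A) N 0) := by
  rw [aExt_zero_iff']
  constructor
  · intro h hf
    obtain ⟨hp, x, hx⟩ := isAssociatedPrime_iff.1 h
    have h1 : ∀ a, a ∈ IsLocalRing.maximalIdeal A ↔ a • x = 0 := by
      intro a; rw [hx, Submodule.mem_colon_singleton]; rfl
    have := LinearMap.congr_fun (hf ((IsLocalRing.maximalIdeal A).liftQ
      (LinearMap.toSpanSingleton A N x) (fun a ha => (h1 a).1 ha))) (Submodule.Quotient.mk 1)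
    have h2 : (1 : A) • x = 0 := this
    exact hp.ne_top ((Ideal.eq_top_iff_one _).2 ((h1 1).2 h2))
  · intro h
    push Not at h
    obtain ⟨f, hf⟩ := h
    refine isAssociatedPrime_iff.2 ⟨inferInstance, f (Submodule.Quotient.mk 1), ?_⟩
    have hle : ∀ a ∈ IsLocalRing.maximalIdeal A, a • f (Submodule.Quotient.mk 1) = 0 := by
      intro a ha
      rw [← map_smul, kk_smul a ha, map_zero]
    refine (IsLocalRing.maximalIdeal.isMaximal A).eq_of_le ?_ ?_
    · intro ht
      apply hf
      have h1 := (Ideal.eq_top_iff_one _).1 ht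
      rw [Submodule.mem_colon_singleton] at h1
      have h2 : (1 : A) • f (Submodule.Quotient.mk 1) = 0 := h1
      ext
      simpa using h2
    · intro a ha
      rw [Submodule.mem_colon_singleton]
      exact hle a ha

lemma ass_iff (p : Ideal R) [p.IsPrime] (N : Type u) [AddCommGroup N] [Module R N] :
    p ∈ associatedPrimes R N ↔ ¬ Subsingleton (aExt (Localization.AtPrime p)
      (kk (Localization.AtPrime p)) (LocalizedModule p.primeCompl N) 0) := by
  have : IsNoetherianRing (Localization.AtPrime p) :=
    IsLocalization.isNoetherianRing p.primeCompl _ inferInstance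
  rw [← ass_local]
  constructor
  · intro h
    exact Module.associatedPrimes.mem_associatedPrimes_atPrime_of_mem_associatedPrimes h
  · intro h
    have := Module.associatedPrimes.comap_mem_associatedPrimes_of_mem_associatedPrimes_of_isLocalizedModule_of_fg
      p.primeCompl (LocalizedModule.mkLinearMap p.primeCompl N) _ h (IsNoetherian.noetherian _)
    have h2 : (IsLocalRing.maximalIdeal (Localization.AtPrime p)).comap
      (algebraMap R (Localization.AtPrime p)) = p := Localization.AtPrime.under_maximalIdeal
    rwa [h2] at this

lemma ass_congr {N N' : Type u} [AddCommGroup N] [Module R N] [AddCommGroup N'] [Module R N']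
    (e : N ≃ₗ[R] N') (p : Ideal R) : IsAssociatedPrime p N ↔ IsAssociatedPrime p N' :=
  ⟨fun h => h.map_of_injective e.toLinearMap e.injective,
   fun h => h.map_of_injective e.symm.toLinearMap e.symm.injective⟩

/-- an associated prime of the cohomology gives nonvanishing locally -/
lemma PRes.ass_ne {M : Type u} [AddCommGroup M] [Module R M] (Q : PRes R M) (i : ℕ)
    (p : Ideal R) [p.IsPrime] (h : IsAssociatedPrime p (Q.Hc i)) :
    ¬ Subsingleton (extM (Localization.AtPrime p) (i+1) (LocalizedModule p.primeCompl M)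
      (Localization.AtPrime p)) := by
  intro hs
  obtain ⟨hp, x, hx⟩ := isAssociatedPrime_iff.1 h
  obtain ⟨y, rfl⟩ := Submodule.mkQ_surjective _ x
  obtain ⟨s, hs'⟩ := Q.loc_zero p.primeCompl i hs y.1 y.2
  apply s.2
  change (s : R) ∈ p
  refine hx.ge ?_
  rw [Submodule.mem_colon_singleton]
  change (s : R) • _ = _
  rw [← map_smul]
  exact (Submodule.Quotient.mk_eq_zero _).2 hs'

end ass

lemma shiftF {R : Type u} [CommRing R] {M : Type u} [AddCommGroup M] [Module R M]
    (F : MinRes R M) (S : Submonoid R) (X : Type u) [AddCommGroup X] [Module (Localization S) X]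
    (m : ℕ) (hM : ∀ i < m, Subsingleton (extM R (i+1) M R))
    (hX : ∀ j ≤ m+1, Subsingleton (aExt (Localization S) X (Localization S) j)) :
    (∀ j ≤ m, Subsingleton (aExt (Localization S) X (LocalizedModule S F.lambdaMod) j)) ∧
    (Subsingleton (aExt (Localization S) X (LocalizedModule S F.lambdaMod) (m+1)) ↔
    Subsingleton (aExt (Localization S) X (LocalizedModule S (F.toPRes.Hc m)) 0)) := by
  refine shift (fun i => Module.Dual R (F.P i)) (fun i => (F.d i).dualMap) S X m
    (F.toPRes.Z_le_K m) (fun i hi => F.toPRes.K_eq_Z i (hM i hi)) ?_ m 0 (by omega)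
  intro i j hj
  have := F.finite i
  have := F.projective i
  exact aExt_finproj j (hX j hj)

lemma sInf_char (P : ℕ → Prop) (n : ℕ) :
    sInf {x : ℕ∞ | ∃ k : ℕ, x = k ∧ P k} = (n : ℕ∞) ↔ P n ∧ ∀ k < n, ¬ P k := by
  constructor
  · intro h
    have hne : {x : ℕ∞ | ∃ k : ℕ, x = k ∧ P k}.Nonempty := by
      by_contra hc
      rw [Set.not_nonempty_iff_eq_empty] at hc
      rw [hc, sInf_empty] at h
      exact ENat.coe_ne_top n h.symm
    obtain ⟨k, hk, hP⟩ := csInf_mem hne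
    rw [h] at hk
    obtain rfl : n = k := by exact_mod_cast hk
    refine ⟨hP, fun j hj hPj => ?_⟩
    have : (n : ℕ∞) ≤ j := h ▸ sInf_le ⟨j, rfl, hPj⟩
    have : n ≤ j := by exact_mod_cast this
    omega
  · rintro ⟨h1, h2⟩
    apply le_antisymm
    · exact sInf_le ⟨n, rfl, h1⟩
    · refine le_sInf ?_
      rintro x ⟨k, rfl, hk⟩
      by_contra hc
      exact h2 k (by exact_mod_cast not_le.1 hc) hk

lemma rgr_char {A : Type u} [CommRing A] {M : Type u} [AddCommGroup M] [Module A M] (m : ℕ) :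
    rgr A M = ((m+1 : ℕ) : ℕ∞) ↔ ¬ Subsingleton (extM A (m+1) M A) ∧
      ∀ i < m, Subsingleton (extM A (i+1) M A) := by
  rw [rgr, sInf_char (fun k => 0 < k ∧ ¬ Subsingleton (extM A k M A))]
  constructor
  · rintro ⟨h1, h2⟩
    refine ⟨h1.2, fun i hi => ?_⟩
    by_contra hc
    exact h2 (i+1) (by omega) ⟨by omega, hc⟩
  · rintro ⟨h1, h2⟩
    refine ⟨⟨by omega, h1⟩, ?_⟩
    rintro k hk ⟨hk0, hk1⟩
    obtain ⟨i, rfl⟩ : ∃ i, k = i + 1 := ⟨k - 1, by omega⟩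
    exact hk1 (h2 i (by omega))

section final
variable {R : Type u} [CommRing R] [IsNoetherianRing R]
variable {M : Type u} [AddCommGroup M] [Module R M] [Module.Finite R M]

/-- the depth of the local ring is large at primes where the Ext module is nonzero -/
lemma fin_depth (hHL : IsHorizontallyLinked R M) (hfin : GDim R M < ⊤) (p : Ideal R) [p.IsPrime]
    (m : ℕ) (hm : ¬ Subsingleton (extM (Localization.AtPrime p) (m+1)
      (LocalizedModule p.primeCompl M) (Localization.AtPrime p))) (j : ℕ) (hj : j ≤ m+1) :
    Subsingleton (aExt (Localization.AtPrime p) (kk (Localization.AtPrime p))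
      (Localization.AtPrime p) j) := by
  have : IsNoetherianRing (Localization.AtPrime p) :=
    IsLocalization.isNoetherianRing p.primeCompl _ inferInstance
  obtain ⟨x, ⟨g, -, hg⟩, -⟩ := sInf_lt_iff.1 hfin
  have hg' := gd_loc p.primeCompl g M hg
  obtain ⟨F, G, ⟨e⟩⟩ := hHL
  have := G.finite 1
  have := G.projective 1
  let f : M →ₗ[R] Module.Dual R (G.P 1) :=
    (LinearMap.range (G.d 0).dualMap).subtype ∘ₗ e.symm.toLinearMap
  have hf : Function.Injective f := Subtype.val_injective.comp e.symm.injective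
  exact key_main g _ _ (lm p.primeCompl f) (LocalizedModule.map_injective _ f hf) hg' m
    (fun h => hm ((extM_iff _ _).2 h)) j hj

lemma fin_main (F : MinRes R M) (hHL : IsHorizontallyLinked R M) (hfin : GDim R M < ⊤)
    (m : ℕ) (hM : ∀ i < m, Subsingleton (extM R (i+1) M R)) (p : Ideal R) [p.IsPrime]
    (hm : ¬ Subsingleton (extM (Localization.AtPrime p) (m+1)
      (LocalizedModule p.primeCompl M) (Localization.AtPrime p))) :
    locDepth R p F.lambdaMod = ((m+1 : ℕ) : ℕ∞) ↔ IsAssociatedPrime p (extM R (m+1) M R) := by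
  obtain ⟨h1, h2⟩ := shiftF F p.primeCompl (kk (Localization.AtPrime p)) m hM
    (fin_depth hHL hfin p m hm)
  obtain ⟨e⟩ := F.toPRes.extMEquivHc m
  rw [ass_congr e p]
  refine Iff.trans ?_ (ass_iff p (F.toPRes.Hc m)).symm
  rw [locDepth, edepth, sInf_char]
  refine Iff.trans ?_ (not_congr h2)
  constructor
  · rintro ⟨h, -⟩ hc
    exact h ((extM_iff _ _).2 hc)
  · intro h
    refine ⟨fun hc => h ((extM_iff _ _).1 hc), fun k hk hc => hc ?_⟩
    exact (extM_iff _ _).2 (h1 k (by omega))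

end final

end Aux

section Statements

variable (R : Type u) [CommRing R] [IsNoetherianRing R]

theorem stmt1 (M : Type u) [AddCommGroup M] [Module R M] [Module.Finite R M]
    (F : MinRes R M) (hHL : IsHorizontallyLinked R M)
    (h0 : 0 < GDim R M) (hfin : GDim R M < ⊤) (n : ℕ) (hn : rgr R M = (n : ℕ∞)) :
    {p : Ideal R | IsAssociatedPrime p (extM R n M R)} =
      {p : Ideal R | ∃ h : p.IsPrime, haveI := h;
        locGDim R p M ≠ 0 ∧ locDepth R p F.lambdaMod = (n : ℕ∞) ∧
          locRgr R p M = (n : ℕ∞)} := by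
  obtain ⟨m, rfl⟩ : ∃ m, n = m + 1 := by
    have h := hn
    rw [rgr, sInf_char (fun k => 0 < k ∧ ¬ Subsingleton (extM R k M R))] at h
    exact ⟨n - 1, by have := h.1.1; omega⟩
  obtain ⟨-, hM⟩ := (rgr_char m).1 hn
  ext p
  constructor
  · intro hp
    have hp' : IsAssociatedPrime p (extM R (m+1) M R) := hp
    have hpr : p.IsPrime := hp'.isPrime
    obtain ⟨e⟩ := F.toPRes.extMEquivHc m
    have hne := F.toPRes.ass_ne m p ((ass_congr e p).1 hp')
    refine ⟨hpr, ?_, (fin_main F hHL hfin m hM p hne).2 hp', ?_⟩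
    · intro hc
      have hc' := (sInf_char (fun k => GDimLE (Localization.AtPrime p) k
        (ModuleCat.of (Localization.AtPrime p) (LocalizedModule p.primeCompl M))) 0).1 hc
      have hz : IsGDimZero (Localization.AtPrime p) (LocalizedModule p.primeCompl M) := hc'.1
      exact hne (hz.2.2.1 (m+1) (by omega))
    · refine (rgr_char m).2 ⟨hne, fun i hi => ?_⟩
      exact (extM_iff _ _).2 (aExt_loc p.primeCompl i M ((extM_iff _ _).1 (hM i hi)))
  · rintro ⟨hpr, -, hd, hr⟩
    exact (fin_main F hHL hfin m hM p ((rgr_char m).1 hr).1).1 hd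

end Statements
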